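/- Let s be an even integer with s ≥ 6, N ≥ 2s, ν ≥ π, and let C = {x_1,…,x_M} ⊂ SO(3) be pairwise distinct points with separation ρ(C) ≥ ν/(N+1). Consider the M×M matrices σ_{00} = (σ_N(x_a,x_b))_{a,b}, σ_{0i} = (X_i^x σ_N(x_a,x_b))_{a,b}, σ_{i0} = (X_i^y σ_N(x_a,x_b))_{a,b}, and σ_{ij} = (X_i^x X_j^y σ_N(x_a,x_b))_{a,b} for i,j ∈ {1,2,3}, and let ‖·‖_∞ denote the maximum-absolute-row-sum matrix norm. Then: ‖I − σ_{00}‖_∞ ≤ C_{0,s}/ν^s, and if C_{0,s}/ν^s < 1 then σ_{00} is invertible with ‖σ_{00}⁻¹‖_∞ ≤ 1/(1 − C_{0,s}/ν^s); ‖σ_{0i}‖_∞ ≤ C_{1,s}(N+1)/ν^s and ‖σ_{i0}‖_∞ ≤ C_{1,s}(N+1)/ν^s; ‖σ_{ij}‖_∞ ≤ C_{2,s}(N+1)²/ν^s for i ≠ j; and ‖(−σ̃_N″(0))·I − σ_{ii}‖_∞ ≤ C_{2,s}(N+1)²/ν^s, and if C_{2,s}/(c_s ν^s) < 1 then σ_{ii}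 is invertible with ‖σ_{ii}⁻¹‖_∞ ≤ 1/(c_s(N+1)²(1 − C_{2,s}/(c_s ν^s))), where c_s = 0.999/(2(s+1)). -/

import Mathlib

noncomputable section

abbrev Mat3 := Matrix (Fin 3) (Fin 3) ℝ

/-- membership in SO(3) -/
def IsSO3 (x : Mat3) : Prop := x.transpose * x = 1 ∧ x.det = 1

/-- rotation angle -/
def rotAngle (x : Mat3) : ℝ := Real.arccos ((Matrix.trace x - 1) / 2)

/-- generators of so(3) -/
def Lgen : Fin 3 → Mat3 :=
  ![!![0, 0, 0; 0, 0, -1; 0, 1, 0],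
    !![0, 0, 1; 0, 0, 0; -1, 0, 0],
    !![0, -1, 0; 1, 0, 0; 0, 0, 0]]

/-- derivative in the first variable along generator `i` -/
def Xx (i : Fin 3) (f : Mat3 → Mat3 → ℝ) : Mat3 → Mat3 → ℝ :=
  fun x y => deriv (fun t : ℝ => f (x * NormedSpace.exp (t • Lgen i)) y) 0

/-- derivative in the second variable along generator `i` -/
def Xy (i : Fin 3) (f : Mat3 → Mat3 → ℝ) : Mat3 → Mat3 → ℝ :=
  fun x y => deriv (fun t : ℝ => f x (y * NormedSpace.exp (t • Lgen i))) 0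

/-- iterated integrals of the sign of the Chebyshev polynomial: the perfect B-spline chain -/
def fspline (s : ℕ) : ℕ → ℝ → ℝ
  | 0 => fun x => (-1 : ℝ) ^ (s - 1) * Real.sign ((Polynomial.Chebyshev.U ℝ ((s : ℤ) - 1)).eval x)
  | (k + 1) => fun x => ∫ t in (-1 : ℝ)..x, fspline s k t

/-- the scaled perfect B-spline g̃_{s-1} -/
def gtilde (s : ℕ) (x : ℝ) : ℝ := fspline s (s - 1) (2 * x)

/-- discrete norm ‖g̃‖_{1,N} -/
def gnorm (s N : ℕ) : ℝ :=
  ∑ k ∈ Finset.Icc (-(N : ℤ)) (N : ℤ), gtilde s ((k : ℝ) / (2 * ((N : ℝ) + 1)))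

/-- the trigonometric kernel σ̃_N (real-valued) -/
def sigmaT (s N : ℕ) (t : ℝ) : ℝ :=
  ((1 / (gnorm s N : ℂ)) *
      ∑ k ∈ Finset.Icc (-(N : ℤ)) (N : ℤ),
        (gtilde s ((k : ℝ) / (2 * ((N : ℝ) + 1))) : ℂ) * Complex.exp ((k : ℂ) * t * Complex.I)).re

/-- the zonal kernel σ_N on SO(3) -/
def sigmaK (s N : ℕ) (x y : Mat3) : ℝ := sigmaT s N (rotAngle (y⁻¹ * x))

/-- rotation axis components -/
def axisComp : Fin 3 → Mat3 → ℝ :=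
  ![fun x => (x 2 1 - x 1 2) / (2 * Real.sin (rotAngle x)),
    fun x => (x 0 2 - x 2 0) / (2 * Real.sin (rotAngle x)),
    fun x => (x 1 0 - x 0 1) / (2 * Real.sin (rotAngle x))]

/-- Levi-Civita symbol on `Fin 3` -/
def eps3 (a b c : Fin 3) : ℝ :=
  if (a, b, c) = (0, 1, 2) ∨ (a, b, c) = (1, 2, 0) ∨ (a, b, c) = (2, 0, 1) then 1
  else if (a, b, c) = (2, 1, 0) ∨ (a, b, c) = (1, 0, 2) ∨ (a, b, c) = (0, 2, 1) then -1
  else 0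

/-- constants c_{l,s} -/
def cConst : ℕ → ℕ → ℝ
  | 0, s => 1.02 * (Nat.factorial (s - 1)) * 2 ^ s * s
  | 1, s => 1.02 * (Nat.factorial (s - 1)) * 2 ^ s * (2 * s)
  | 2, s => 1.02 * (Nat.factorial (s - 1)) * 2 ^ s * (4 * s + 1)
  | _, s => 1.02 * (Nat.factorial (s - 1)) * 2 ^ s * (9 * s - 2)

/-- ζ(m) for natural m -/
def zetaNat (m : ℕ) : ℝ := ∑' n : ℕ, (1 : ℝ) / ((n : ℝ) + 1) ^ m

/-- constants C_{i,s} = 124 c_{i,s} ζ(s-2) -/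
def CConst (i s : ℕ) : ℝ := 124 * cConst i s * zetaNat (s - 2)

end

open scoped Real

/-- maximum absolute row sum norm -/
noncomputable def rowSumNorm {M : ℕ} (A : Matrix (Fin M) (Fin M) ℝ) : ℝ :=
  ⨆ a, ∑ b, |A a b|

section

open Set MeasureTheory

/-- The increasing knots `-cos (jπ/s)` of the perfect B-spline. -/
noncomputable def knot (s j : ℕ) : ℝ := -Real.cos (j * π / s)

lemma knot_zero (s : ℕ) : knot s 0 = -1 := by simp [knot]

lemma knot_self {s : ℕ} (hs : 0 < s) : knot s s = 1 := by
  have : (s : ℝ) ≠ 0 := by positivity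
  rw [knot, mul_div_cancel_left₀ _ this]; simp

lemma knot_angle_mem {s j : ℕ} (hj : j ≤ s) : (j * π / s : ℝ) ∈ Icc 0 π := by
  refine ⟨by positivity, ?_⟩
  rcases Nat.eq_zero_or_pos s with rfl | hs
  · simp [Real.pi_pos.le]
  · have : (0 : ℝ) < s := by positivity
    rw [div_le_iff₀ this, mul_comm]
    have : (j : ℝ) ≤ s := by exact_mod_cast hj
    gcongr

lemma abs_knot_le (s j : ℕ) : |knot s j| ≤ 1 := by
  rw [knot, abs_neg]; exact Real.abs_cos_le_one _

lemma knot_le_knot_succ {s j : ℕ} (hj : j < s) : knot s j ≤ knot s (j + 1) := by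
  have h1 := knot_angle_mem hj.le
  have h2 := knot_angle_mem (Nat.succ_le_of_lt hj)
  refine neg_le_neg (Real.cos_le_cos_of_nonneg_of_le_pi h1.1 h2.2 ?_)
  push_cast
  gcongr
  linarith

/-- On the `j`-th knot interval the spline of order zero is the constant `(-1) ^ j`. -/
lemma fspline_zero_of_mem {s j : ℕ} (hs : Even s) (hj : j < s) {x : ℝ}
    (hx : x ∈ Ioo (knot s j) (knot s (j + 1))) : fspline s 0 x = (-1) ^ j := by
  have hs0 : 0 < s := by omega
  have hsr : (0 : ℝ) < s := by exact_mod_cast hs0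
  have h1 := knot_angle_mem hj.le
  have h2 := knot_angle_mem (Nat.succ_le_of_lt hj)
  have hb1 := abs_le.1 (abs_knot_le s j)
  have hb2 := abs_le.1 (abs_knot_le s (j + 1))
  set θ := Real.arccos (-x) with hθ
  have hcos : Real.cos θ = -x := Real.cos_arccos (by linarith [hx.2]) (by linarith [hx.1])
  have hl : j * π / s < θ := by
    rw [← Real.arccos_cos h1.1 h1.2]
    refine Real.strictAntiOn_arccos ⟨by linarith [hx.2], by linarith [hx.1]⟩
      ⟨Real.neg_one_le_cos _, Real.cos_le_one _⟩ ?_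
    have := hx.1
    rw [knot] at this
    linarith
  have hr : θ < ((j + 1 : ℕ) : ℝ) * π / s := by
    rw [← Real.arccos_cos h2.1 h2.2]
    refine Real.strictAntiOn_arccos ⟨Real.neg_one_le_cos _, Real.cos_le_one _⟩
      ⟨by linarith [hx.2], by linarith [hx.1]⟩ ?_
    have := hx.2
    rw [knot] at this
    linarith
  have hsin : 0 < Real.sin θ := Real.sin_pos_of_pos_of_lt_pi (h1.1.trans_lt hl) (hr.trans_le h2.2)
  have hU := Polynomial.Chebyshev.U_real_cos (π - θ) ((s : ℤ) - 1)
  rw [Real.cos_pi_sub, Real.sin_pi_sub, hcos, neg_neg] at hU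
  have hp : 0 < Real.sin (s * θ - j * π) := by
    apply Real.sin_pos_of_pos_of_lt_pi
    · rw [div_lt_iff₀ hsr] at hl; linarith
    · rw [lt_div_iff₀ hsr] at hr; push_cast at hr; linarith
  rw [Real.sin_sub_nat_mul_pi] at hp
  have hneg : Real.sin ((((s : ℤ) - 1 : ℤ) + 1 : ℝ) * (π - θ)) = -Real.sin (s * θ) := by
    obtain ⟨m, rfl⟩ := hs
    have : (((((m + m : ℕ) : ℤ) - 1 : ℤ) : ℝ) + 1) * (π - θ)
        = m * (2 * π) - ((m + m : ℕ) : ℝ) * θ := by push_cast; ring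
    rw [this, Real.sin_nat_mul_two_pi_sub]
  rw [hneg] at hU
  have hodd : Odd (s - 1) := Nat.Even.sub_odd (by omega) hs odd_one
  rw [fspline, hodd.neg_one_pow]
  rcases Nat.even_or_odd j with hj | hj
  · rw [hj.neg_one_pow] at hp ⊢
    have : (Polynomial.Chebyshev.U ℝ ((s : ℤ) - 1)).eval x < 0 := by
      by_contra h
      have := mul_nonneg (not_lt.1 h) hsin.le
      linarith
    simp [Real.sign_of_neg this]
  · rw [hj.neg_one_pow] at hp ⊢
    have : 0 < (Polynomial.Chebyshev.U ℝ ((s : ℤ) - 1)).eval x := by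
      by_contra h
      have := mul_nonpos_of_nonpos_of_nonneg (not_lt.1 h) hsin.le
      linarith
    simp [Real.sign_of_pos this]

lemma fspline_zero_apply (s : ℕ) (x : ℝ) : fspline s 0 x =
    (-1 : ℝ) ^ (s - 1) * Real.sign ((Polynomial.Chebyshev.U ℝ ((s : ℤ) - 1)).eval x) := rfl

lemma fspline_succ_apply (s k : ℕ) (x : ℝ) :
    fspline s (k + 1) x = ∫ t in (-1 : ℝ)..x, fspline s k t := rfl

lemma abs_fspline_zero_le (s : ℕ) (x : ℝ) : |fspline s 0 x| ≤ 1 := by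
  rw [fspline_zero_apply, abs_mul, abs_pow, abs_neg, abs_one, one_pow, one_mul]
  rcases Real.sign_apply_eq ((Polynomial.Chebyshev.U ℝ ((s : ℤ) - 1)).eval x) with h | h | h <;>
    simp [h]

lemma measurable_fspline_zero (s : ℕ) : Measurable (fspline s 0) := by
  refine Measurable.const_mul (f := fun x => Real.sign _) ?_ _
  have hm : Measurable Real.sign := by
    unfold Real.sign
    refine Measurable.ite measurableSet_Iio measurable_const ?_
    exact Measurable.ite measurableSet_Ioi measurable_const measurable_const
  exact hm.comp (Polynomial.continuous _).measurable

lemma intervalIntegrable_fspline (s k : ℕ) (a b : ℝ) :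
    IntervalIntegrable (fspline s k) volume a b := by
  induction k generalizing a b with
  | zero =>
    refine (intervalIntegrable_const (c := (1 : ℝ))).mono_fun
      (measurable_fspline_zero s).aestronglyMeasurable (Filter.Eventually.of_forall fun x => ?_)
    simpa using abs_fspline_zero_le s x
  | succ k ih => exact (intervalIntegral.continuous_primitive ih (-1)).intervalIntegrable _ _

lemma continuous_fspline_succ (s k : ℕ) : Continuous (fspline s (k + 1)) :=
  intervalIntegral.continuous_primitive (intervalIntegrable_fspline s k) (-1)

lemma finite_roots_chebyshevU {s : ℕ} (hs : 0 < s) :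
    {x : ℝ | (Polynomial.Chebyshev.U ℝ ((s : ℤ) - 1)).eval x = 0}.Finite := by
  have h0 : Polynomial.Chebyshev.U ℝ ((s : ℤ) - 1) ≠ 0 := by
    intro h
    have := Polynomial.Chebyshev.U_eval_one (R := ℝ) ((s : ℤ) - 1)
    rw [h] at this
    have hs' : (s : ℝ) = 0 := by simpa using this.symm
    exact hs.ne' (by exact_mod_cast hs')
  exact Polynomial.finite_setOfPred_isRoot h0

lemma continuousAt_fspline {s : ℕ} (k : ℕ) {x : ℝ}
    (hx : (Polynomial.Chebyshev.U ℝ ((s : ℤ) - 1)).eval x ≠ 0) :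
    ContinuousAt (fspline s k) x := by
  cases k with
  | succ k => exact (continuous_fspline_succ s k).continuousAt
  | zero =>
    have hc : ContinuousAt (fun y => (Polynomial.Chebyshev.U ℝ ((s : ℤ) - 1)).eval y) x :=
      (Polynomial.continuous _).continuousAt
    refine ContinuousAt.congr (f := fun _ => fspline s 0 x) continuousAt_const ?_
    rcases hx.lt_or_gt with h | h
    · filter_upwards [hc.eventually_lt_const h] with y hy
      rw [fspline_zero_apply, fspline_zero_apply, Real.sign_of_neg h, Real.sign_of_neg hy]
    · filter_upwards [hc.eventually_const_lt h] with y hy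
      rw [fspline_zero_apply, fspline_zero_apply, Real.sign_of_pos h, Real.sign_of_pos hy]

lemma hasDerivAt_fspline_succ {s : ℕ} (k : ℕ) {x : ℝ}
    (hx : (Polynomial.Chebyshev.U ℝ ((s : ℤ) - 1)).eval x ≠ 0) :
    HasDerivAt (fspline s (k + 1)) (fspline s k x) x := by
  have hm : Measurable (fspline s k) := by
    cases k with
    | zero => exact measurable_fspline_zero s
    | succ k => exact (continuous_fspline_succ s k).measurable
  exact intervalIntegral.integral_hasDerivAt_right (intervalIntegrable_fspline s k _ _)
    (hm.stronglyMeasurable.stronglyMeasurableAtFilter) (continuousAt_fspline k hx)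

/-- The pairing `∫₋₁¹ f_k φ` of a member of the spline chain with a test function. -/
noncomputable def splinePair (s k : ℕ) (φ : ℝ → ℂ) : ℂ :=
  ∫ x in (-1 : ℝ)..1, (fspline s k x : ℂ) * φ x

lemma intervalIntegrable_fspline_mul (s k : ℕ) (a b : ℝ) {φ : ℝ → ℂ} (hφ : Continuous φ) :
    IntervalIntegrable (fun x => (fspline s k x : ℂ) * φ x) volume a b :=
  IntervalIntegrable.mul_continuousOn
    ⟨(intervalIntegrable_fspline s k a b).1.ofReal, (intervalIntegrable_fspline s k a b).2.ofReal⟩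
    hφ.continuousOn

lemma splinePair_add (s k : ℕ) {φ ψ : ℝ → ℂ} (hφ : Continuous φ) (hψ : Continuous ψ) :
    splinePair s k (fun x => φ x + ψ x) = splinePair s k φ + splinePair s k ψ := by
  unfold splinePair
  rw [← intervalIntegral.integral_add (intervalIntegrable_fspline_mul _ _ _ _ hφ)
    (intervalIntegrable_fspline_mul _ _ _ _ hψ)]
  simp only [mul_add]

lemma splinePair_const_mul (s k : ℕ) (c : ℂ) (φ : ℝ → ℂ) :
    splinePair s k (fun x => c * φ x) = c * splinePair s k φ := by
  unfold splinePair
  rw [← intervalIntegral.integral_const_mul]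
  congr 1 with x
  ring

lemma fspline_succ_neg_one (s k : ℕ) : fspline s (k + 1) (-1) = 0 := by
  rw [fspline_succ_apply, intervalIntegral.integral_same]

lemma splinePair_succ_deriv {s : ℕ} (hs : 0 < s) {k : ℕ} (hk : fspline s (k + 1) 1 = 0)
    {Φ Φ' : ℝ → ℂ} (hΦ : ∀ x, HasDerivAt Φ (Φ' x) x) (hc : Continuous Φ') :
    splinePair s (k + 1) Φ' = -splinePair s k Φ := by
  have hΦc : Continuous Φ := continuous_iff_continuousAt.2 fun x => (hΦ x).continuousAt
  have hi1 := intervalIntegrable_fspline_mul s k (-1) 1 hΦc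
  have hi2 := intervalIntegrable_fspline_mul s (k + 1) (-1) 1 hc
  have := integral_eq_of_hasDerivAt_off_countable
    (fun x => (fspline s (k + 1) x : ℂ) * Φ x)
    (fun x => (fspline s k x : ℂ) * Φ x + (fspline s (k + 1) x : ℂ) * Φ' x) (a := -1) (b := 1)
    (finite_roots_chebyshevU hs).countable
    ((Complex.continuous_ofReal.comp (continuous_fspline_succ s k)).mul hΦc).continuousOn
    (fun x hx => (hasDerivAt_fspline_succ k hx.2).ofReal_comp.mul (hΦ x)) (hi1.add hi2)
  rw [intervalIntegral.integral_add hi1 hi2, hk, fspline_succ_neg_one] at this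
  simp only [Complex.ofReal_zero, zero_mul, sub_zero] at this
  unfold splinePair
  linear_combination this

/-- The alternating knot functional, of which the perfect B-spline is the Peano kernel. -/
noncomputable def knotSum (s : ℕ) (Φ : ℝ → ℂ) : ℂ :=
  ∑ j ∈ Finset.range s, (-1) ^ j * (Φ (knot s (j + 1)) - Φ (knot s j))

lemma integral_fspline_zero_mul {s j : ℕ} (hs : Even s) (hj : j < s) {y : ℝ}
    (hy : y ∈ Icc (knot s j) (knot s (j + 1))) (φ : ℝ → ℂ) :
    ∫ x in (knot s j)..y, (fspline s 0 x : ℂ) * φ x = (-1) ^ j * ∫ x in (knot s j)..y, φ x := by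
  rw [← intervalIntegral.integral_const_mul]
  refine intervalIntegral.integral_congr_ae ?_
  have hne : ∀ᵐ x : ℝ, x ≠ knot s (j + 1) := by
    simp [ae_iff, measure_singleton]
  filter_upwards [hne] with x hx hxm
  rw [uIoc_of_le hy.1] at hxm
  rw [fspline_zero_of_mem hs hj ⟨hxm.1, lt_of_le_of_ne (hxm.2.trans hy.2) hx⟩]
  push_cast
  rfl

lemma splinePair_zero_deriv {s : ℕ} (hs : Even s) (hs0 : 0 < s)
    {Φ Φ' : ℝ → ℂ} (hΦ : ∀ x, HasDerivAt Φ (Φ' x) x) (hc : Continuous Φ') :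
    splinePair s 0 Φ' = knotSum s Φ := by
  unfold splinePair knotSum
  rw [← knot_zero s, ← knot_self hs0, ← intervalIntegral.sum_integral_adjacent_intervals
    fun k _ => intervalIntegrable_fspline_mul _ _ _ _ hc]
  refine Finset.sum_congr rfl fun j hj => ?_
  rw [Finset.mem_range] at hj
  rw [integral_fspline_zero_mul hs hj ⟨knot_le_knot_succ hj, le_rfl⟩,
    intervalIntegral.integral_eq_sub_of_hasDerivAt (fun x _ => hΦ x) (hc.intervalIntegrable _ _)]

lemma norm_knotSum_le (s : ℕ) {Φ : ℝ → ℂ} (hΦ : ∀ x, |x| ≤ 1 → ‖Φ x‖ ≤ 1) :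
    ‖knotSum s Φ‖ ≤ 2 * s := by
  unfold knotSum
  refine (norm_sum_le _ _).trans ?_
  have : ∀ j ∈ Finset.range s, ‖(-1 : ℂ) ^ j * (Φ (knot s (j + 1)) - Φ (knot s j))‖ ≤ 2 := by
    intro j _
    rw [norm_mul, norm_pow, norm_neg, norm_one, one_pow, one_mul]
    have := norm_sub_le (Φ (knot s (j + 1))) (Φ (knot s j))
    linarith [hΦ _ (abs_knot_le s (j + 1)), hΦ _ (abs_knot_le s j)]
  refine (Finset.sum_le_sum this).trans ?_
  simp [mul_comm]

lemma knotSum_eq_circle_sum {s : ℕ} (hs0 : 0 < s) (Φ : ℝ → ℂ) :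
    knotSum s Φ = -∑ j ∈ Finset.range (2 * s), (-1) ^ j * Φ (knot s j) := by
  have hsr : (s : ℝ) ≠ 0 := by positivity
  have hrefl : ∑ j ∈ Finset.range s, (-1 : ℂ) ^ j * Φ (knot s (j + 1)) =
      -∑ j ∈ Finset.range s, (-1 : ℂ) ^ (s + j) * Φ (knot s (s + j)) := by
    rw [← Finset.sum_range_reflect, ← Finset.sum_neg_distrib]
    refine Finset.sum_congr rfl fun j hj => ?_
    rw [Finset.mem_range] at hj
    have hk : knot s (s - 1 - j + 1) = knot s (s + j) := by
      have : s - 1 - j + 1 = s - j := by omega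
      rw [this, knot, knot, Nat.cast_sub hj.le]
      have h1 : ((s : ℝ) - j) * π / s = π - j * π / s := by field_simp
      have h2 : ((s + j : ℕ) : ℝ) * π / s = j * π / s + π := by push_cast; field_simp; ring
      rw [h1, h2, Real.cos_pi_sub, Real.cos_add_pi]
    have hp : (-1 : ℂ) ^ (s - 1 - j) = -(-1) ^ (s + j) := by
      have h : s + j = (s - 1 - j) + 2 * j + 1 := by omega
      rw [h, pow_succ, pow_add, pow_mul]; simp
    rw [hk, hp]; ring
  rw [two_mul, Finset.sum_range_add, knotSum]
  simp only [mul_sub, Finset.sum_sub_distrib, hrefl]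
  ring

lemma sum_pow_root_of_unity {s : ℕ} (hs0 : 0 < s) (E : ℕ) :
    ∑ j ∈ Finset.range (2 * s), (Complex.exp (2 * π * Complex.I / (2 * s : ℕ)) ^ E) ^ j =
      if 2 * s ∣ E then (2 * s : ℂ) else 0 := by
  have hprim := Complex.isPrimitiveRoot_exp (2 * s) (by omega)
  split_ifs with h
  · rw [(hprim.pow_eq_one_iff_dvd E).2 h]; simp
  · rw [geom_sum_eq (fun h1 => h ((hprim.pow_eq_one_iff_dvd E).1 h1)), ← pow_mul, mul_comm E,
      pow_mul, hprim.pow_eq_one, one_pow, sub_self, zero_div]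

lemma knotSum_pow {s : ℕ} (hs0 : 0 < s) (n : ℕ) :
    knotSum s (fun x => (x : ℂ) ^ n) = -(-1) ^ n / 2 ^ n * ∑ m ∈ Finset.range (n + 1),
      (n.choose m : ℂ) * if 2 * s ∣ s + (2 * s - 1) * n + 2 * m then (2 * s : ℂ) else 0 := by
  rw [knotSum_eq_circle_sum hs0]
  set z := Complex.exp (2 * π * Complex.I / (2 * s : ℕ)) with hz
  have hsc : (s : ℂ) ≠ 0 := by exact_mod_cast hs0.ne'
  have hprim : IsPrimitiveRoot z (2 * s) := Complex.isPrimitiveRoot_exp (2 * s) (by omega)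
  have hzs : z ^ s = -1 := by
    rw [hz, ← Complex.exp_nat_mul]
    have : (s : ℂ) * (2 * π * Complex.I / (2 * s : ℕ)) = π * Complex.I := by
      push_cast; field_simp
    rw [this, Complex.exp_pi_mul_I]
  have hz0 : z ≠ 0 := Complex.exp_ne_zero _
  have hinv : z⁻¹ = z ^ (2 * s - 1) := by
    refine inv_eq_of_mul_eq_one_left ?_
    rw [← pow_succ, Nat.sub_add_cancel (by omega), hprim.pow_eq_one]
  have hcos : ∀ j : ℕ, ((knot s j : ℝ) : ℂ) = -(z ^ j + (z⁻¹) ^ j) / 2 := by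
    intro j
    have h1 : z ^ j = Complex.exp ((j * π / s : ℂ) * Complex.I) := by
      rw [hz, ← Complex.exp_nat_mul]; congr 1; push_cast; field_simp
    have h2 : (z⁻¹) ^ j = Complex.exp (-(j * π / s : ℂ) * Complex.I) := by
      rw [inv_pow, h1, ← Complex.exp_neg, neg_mul]
    rw [h1, h2, knot]
    push_cast
    rw [Complex.cos]; ring
  have hterm : ∀ j : ℕ, (-1 : ℂ) ^ j * ((knot s j : ℝ) : ℂ) ^ n =
      (-1) ^ n / 2 ^ n * ∑ m ∈ Finset.range (n + 1),
        (n.choose m : ℂ) * (z ^ (s + (2 * s - 1) * n + 2 * m)) ^ j := by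
    intro j
    have h1 : z ^ j + (z⁻¹) ^ j = (z⁻¹) ^ j * ((z ^ 2) ^ j + 1) := by
      have : (z⁻¹) ^ j * (z ^ 2) ^ j = z ^ j := by
        rw [← mul_pow]; congr 1; field_simp
      rw [mul_add, this, mul_one]
    rw [hcos, h1, neg_div, neg_pow (_ / _), div_pow, mul_pow, add_pow, ← hzs, hinv, Finset.mul_sum,
      Finset.sum_div, Finset.mul_sum, Finset.mul_sum, Finset.mul_sum]
    refine Finset.sum_congr rfl fun m _ => ?_
    rw [one_pow, mul_one, pow_add, pow_add, mul_pow, mul_pow]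
    simp only [← pow_mul]
    have e1 : (2 * s - 1) * j * n = (2 * s - 1) * n * j := by ring
    have e2 : 2 * j * m = 2 * m * j := by ring
    rw [e1, e2]
    ring
  simp only [hterm]
  rw [← Finset.mul_sum, Finset.sum_comm]
  simp only [← Finset.mul_sum, hz, sum_pow_root_of_unity hs0]
  ring

lemma dvd_exponent_iff {s n m : ℕ} (hs0 : 0 < s) :
    2 * s ∣ s + (2 * s - 1) * n + 2 * m ↔ (2 * s : ℤ) ∣ s - n + 2 * m := by
  rw [← Int.natCast_dvd_natCast]
  push_cast [Nat.cast_sub (show 1 ≤ 2 * s by omega)]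
  have : (s : ℤ) + (2 * s - 1) * n + 2 * m = (s - n + 2 * m) + (2 * s) * n := by ring
  rw [this, dvd_add_left (dvd_mul_right _ _)]

lemma knotSum_pow_of_lt {s n : ℕ} (hn : n < s) : knotSum s (fun x => (x : ℂ) ^ n) = 0 := by
  rw [knotSum_pow (by omega), Finset.sum_eq_zero, mul_zero]
  intro m hm
  rw [Finset.mem_range] at hm
  rw [if_neg, mul_zero]
  rw [dvd_exponent_iff (by omega)]
  intro h
  have := Int.eq_zero_of_dvd_of_nonneg_of_lt (by omega) (by omega) h
  omega

lemma knotSum_pow_self {s : ℕ} (hs : Even s) (hs0 : 0 < s) :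
    knotSum s (fun x => (x : ℂ) ^ s) = -(4 * s) / 2 ^ s := by
  rw [knotSum_pow hs0, hs.neg_one_pow]
  have : ∀ m ∈ Finset.range (s + 1), ((s.choose m : ℂ) *
      if 2 * s ∣ s + (2 * s - 1) * s + 2 * m then (2 * s : ℂ) else 0) =
      (if m = 0 then (2 * s : ℂ) else 0) + (if m = s then (2 * s : ℂ) else 0) := by
    intro m hm
    rw [Finset.mem_range] at hm
    by_cases h0 : m = 0
    · subst h0
      rw [if_pos ((dvd_exponent_iff hs0).2 (by simp))]
      simp [hs0.ne]
    · by_cases h1 : m = s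
      · subst h1
        rw [if_pos ((dvd_exponent_iff hs0).2 (by simp))]
        simp [h0]
      · rw [if_neg, if_neg h0, if_neg h1]; · simp
        rw [dvd_exponent_iff hs0]
        intro h
        have := Int.eq_zero_of_dvd_of_nonneg_of_lt (by omega) (by omega) h
        omega
  rw [Finset.sum_congr rfl this, Finset.sum_add_distrib, Finset.sum_ite_eq', Finset.sum_ite_eq']
  simp
  ring

lemma knotSum_pow_add_two {s : ℕ} (hs : Even s) (hs0 : 2 < s) :
    knotSum s (fun x => (x : ℂ) ^ (s + 2)) = -(s * (s + 2)) / 2 ^ s := by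
  have hs0' : 0 < s := by omega
  rw [knotSum_pow hs0', (hs.add even_two).neg_one_pow]
  have : ∀ m ∈ Finset.range (s + 2 + 1), (((s + 2).choose m : ℂ) *
      if 2 * s ∣ s + (2 * s - 1) * (s + 2) + 2 * m then (2 * s : ℂ) else 0) =
      (if m = 1 then ((s + 2) * (2 * s) : ℂ) else 0) +
        (if m = s + 1 then ((s + 2) * (2 * s) : ℂ) else 0) := by
    intro m hm
    rw [Finset.mem_range] at hm
    by_cases h0 : m = 1
    · subst h0
      rw [if_pos ((dvd_exponent_iff hs0').2 (by simp))]
      simp [hs0'.ne']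
    · by_cases h1 : m = s + 1
      · subst h1
        rw [if_pos ((dvd_exponent_iff hs0').2 (by push_cast; exact ⟨1, by ring⟩)),
          show s + 2 = (s + 1) + 1 from rfl, Nat.choose_succ_self_right]
        simp [hs0'.ne']; ring
      · rw [if_neg, if_neg h0, if_neg h1]; · simp
        rw [dvd_exponent_iff hs0']
        rintro ⟨c, hc⟩
        push_cast at hc
        have hc' : (m : ℤ) - 1 = s * c := by linarith
        have hlo : -1 < c := by
          by_contra hcon
          have : (s : ℤ) * c ≤ s * (-1) := by gcongr; omega
          omega
        have hhi : c < 2 := by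
          by_contra hcon
          have : (s : ℤ) * 2 ≤ s * c := by gcongr; omega
          omega
        interval_cases c <;> omega
  rw [Finset.sum_congr rfl this, Finset.sum_add_distrib, Finset.sum_ite_eq', Finset.sum_ite_eq']
  simp
  ring

lemma splinePair_one (s k : ℕ) : splinePair s k (fun _ => 1) = (fspline s (k + 1) 1 : ℂ) := by
  simp only [splinePair, mul_one, fspline_succ_apply, intervalIntegral.integral_ofReal]

lemma hasDerivAt_ofReal_pow_div (n : ℕ) (x : ℝ) :
    HasDerivAt (fun x : ℝ => (1 / (n + 1) : ℂ) * (x : ℂ) ^ (n + 1)) ((x : ℂ) ^ n) x := by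
  have h := ((Complex.ofRealCLM.hasDerivAt (x := x)).pow (n + 1)).const_mul (1 / (n + 1) : ℂ)
  have hn : (n + 1 : ℂ) ≠ 0 := by exact_mod_cast n.succ_ne_zero
  convert! h using 1
  simp
  field_simp

lemma continuous_ofReal_pow (n : ℕ) : Continuous fun x : ℝ => (x : ℂ) ^ n := by fun_prop

lemma knotSum_const_mul (s : ℕ) (c : ℂ) (Φ : ℝ → ℂ) :
    knotSum s (fun x => c * Φ x) = c * knotSum s Φ := by
  unfold knotSum
  rw [Finset.mul_sum]
  exact Finset.sum_congr rfl fun j _ => by ring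

lemma splinePair_zero_pow {s : ℕ} (hs : Even s) (hs0 : 0 < s) (n : ℕ) :
    splinePair s 0 (fun x => (x : ℂ) ^ n) =
      1 / (n + 1) * knotSum s (fun x => (x : ℂ) ^ (n + 1)) := by
  rw [splinePair_zero_deriv hs hs0 (hasDerivAt_ofReal_pow_div n) (continuous_ofReal_pow n),
    knotSum_const_mul]

lemma splinePair_succ_pow {s : ℕ} (hs0 : 0 < s) {k : ℕ} (hk : fspline s (k + 1) 1 = 0) (n : ℕ) :
    splinePair s (k + 1) (fun x => (x : ℂ) ^ n) =
      -(1 / (n + 1) * splinePair s k (fun x => (x : ℂ) ^ (n + 1))) := by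
  rw [splinePair_succ_deriv hs0 hk (hasDerivAt_ofReal_pow_div n) (continuous_ofReal_pow n),
    splinePair_const_mul]

lemma splinePair_pow_eq_zero {s : ℕ} (hs : Even s) {k n : ℕ} (h : n + k + 2 ≤ s) :
    splinePair s k (fun x => (x : ℂ) ^ n) = 0 := by
  induction k generalizing n with
  | zero =>
    rw [splinePair_zero_pow hs (by omega), knotSum_pow_of_lt (by omega), mul_zero]
  | succ k ih =>
    have hk : fspline s (k + 1) 1 = 0 := by
      have h1 := ih (n := 0) (by omega)
      simp only [pow_zero] at h1
      rw [splinePair_one] at h1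
      exact_mod_cast h1
    rw [splinePair_succ_pow (by omega) hk, ih (by omega), mul_zero, neg_zero]

/-- The splines of the chain vanish at the right end point. -/
lemma fspline_succ_one {s : ℕ} (hs : Even s) {k : ℕ} (h : k + 2 ≤ s) :
    fspline s (k + 1) 1 = 0 := by
  have h1 := splinePair_pow_eq_zero hs (k := k) (n := 0) (by omega)
  simp only [pow_zero] at h1
  rw [splinePair_one] at h1
  exact_mod_cast h1

lemma splinePair_pow_mul_factorial {s : ℕ} (hs : Even s) {k : ℕ} (h : k + 1 ≤ s) (n : ℕ) :
    splinePair s k (fun x => (x : ℂ) ^ n) * (n + k + 1).factorial =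
      (-1) ^ k * n.factorial * knotSum s (fun x => (x : ℂ) ^ (n + k + 1)) := by
  induction k generalizing n with
  | zero =>
    have hn : (n + 1 : ℂ) ≠ 0 := by exact_mod_cast n.succ_ne_zero
    rw [splinePair_zero_pow hs (by omega), add_zero, Nat.factorial_succ]
    push_cast
    field_simp
  | succ k ih =>
    have hn : (n + 1 : ℂ) ≠ 0 := by exact_mod_cast n.succ_ne_zero
    rw [splinePair_succ_pow (by omega) (fspline_succ_one hs (by omega))]
    have := ih (by omega) (n + 1)
    rw [show n + 1 + k + 1 = n + (k + 1) + 1 by ring, Nat.factorial_succ n] at this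
    push_cast at this ⊢
    rw [pow_succ]
    field_simp
    linear_combination -this

/-- The total mass `2^(2-s)/(s-1)!` of the perfect B-spline. -/
noncomputable def splineMass (s : ℕ) : ℝ := 4 * s / (2 ^ s * s.factorial)

lemma splineMass_pos {s : ℕ} (hs0 : 0 < s) : 0 < splineMass s := by
  unfold splineMass; positivity

lemma splinePair_mass {s : ℕ} (hs : Even s) (hs0 : 0 < s) :
    splinePair s (s - 1) (fun _ => 1) = splineMass s := by
  have h := splinePair_pow_mul_factorial hs (k := s - 1) (by omega) 0
  have hodd : Odd (s - 1) := Nat.Even.sub_odd (by omega) hs odd_one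
  rw [zero_add, Nat.sub_add_cancel (by omega), knotSum_pow_self hs hs0, hodd.neg_one_pow] at h
  simp only [pow_zero] at h
  have hf : (s.factorial : ℂ) ≠ 0 := by exact_mod_cast s.factorial_ne_zero
  rw [eq_div_of_mul_eq hf h, splineMass]
  push_cast
  field_simp
  simp

lemma splinePair_second_moment {s : ℕ} (hs : Even s) (hs0 : 2 < s) :
    splinePair s (s - 1) (fun x => (x : ℂ) ^ 2) = splineMass s / (2 * (s + 1)) := by
  have h := splinePair_pow_mul_factorial hs (k := s - 1) (by omega) 2
  have hodd : Odd (s - 1) := Nat.Even.sub_odd (by omega) hs odd_one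
  rw [show 2 + (s - 1) + 1 = s + 2 by omega, knotSum_pow_add_two hs hs0, hodd.neg_one_pow] at h
  have hf : (s.factorial : ℂ) ≠ 0 := by exact_mod_cast s.factorial_ne_zero
  have hf2 : ((s + 2).factorial : ℂ) ≠ 0 := by exact_mod_cast (s + 2).factorial_ne_zero
  have h1 : (s + 1 : ℂ) ≠ 0 := by exact_mod_cast s.succ_ne_zero
  have h2 : (s + 2 : ℂ) ≠ 0 := by exact_mod_cast (s + 1).succ_ne_zero
  rw [eq_div_of_mul_eq hf2 h, splineMass, Nat.factorial_succ (s + 1),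
    Nat.factorial_succ s, Nat.factorial_two]
  push_cast
  rw [show (s : ℂ) + 1 + 1 = s + 2 by ring]
  field_simp
  norm_num
  ring

lemma fspline_one_of_mem {s j : ℕ} (hs : Even s) (hj : j < s) {y : ℝ}
    (hy : y ∈ Icc (knot s j) (knot s (j + 1))) :
    fspline s 1 y = fspline s 1 (knot s j) + (-1) ^ j * (y - knot s j) := by
  have h := integral_fspline_zero_mul hs hj hy (fun _ => 1)
  simp only [mul_one, intervalIntegral.integral_ofReal, intervalIntegral.integral_const] at h
  have h' : ∫ x in (knot s j)..y, fspline s 0 x = (-1) ^ j * (y - knot s j) := by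
    apply Complex.ofReal_injective
    rw [h]; push_cast; simp
  rw [fspline_succ_apply, fspline_succ_apply, ← h',
    intervalIntegral.integral_add_adjacent_intervals (intervalIntegrable_fspline _ _ _ _)
      (intervalIntegrable_fspline _ _ _ _)]

lemma fspline_one_knot {s j : ℕ} (hs : Even s) (hs2 : 2 ≤ s) (hj : j ≤ s) :
    fspline s 1 (knot s j) = -(-1) ^ j * (Real.tan (π / (2 * s)) * Real.sin (j * π / s)) := by
  induction j with
  | zero => rw [knot_zero, fspline_succ_neg_one]; simp
  | succ j ih =>
    rw [fspline_one_of_mem hs hj ⟨knot_le_knot_succ hj, le_rfl⟩, ih (by omega)]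
    have hsr : (s : ℝ) ≠ 0 := by positivity
    have hs2r : (2 : ℝ) ≤ s := by exact_mod_cast hs2
    set α := π / (2 * s) with hα
    have hcos : Real.cos α ≠ 0 := by
      refine (Real.cos_pos_of_mem_Ioo ⟨by have := Real.pi_pos; have : 0 < α := by positivity
                                          linarith, ?_⟩).ne'
      rw [hα, div_lt_div_iff₀ (by positivity) (by positivity)]
      nlinarith [Real.pi_pos]
    have e1 : ((j + 1 : ℕ) : ℝ) * π / s = (2 * j + 1) * α + α := by
      rw [hα]; push_cast; field_simp; ring
    have e2 : (j : ℝ) * π / s = (2 * j + 1) * α - α := by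
      rw [hα]; field_simp; ring
    rw [knot, knot, e1, e2, Real.tan_eq_sin_div_cos, Real.cos_add, Real.cos_sub, Real.sin_add,
      Real.sin_sub, pow_succ]
    field_simp
    ring

lemma abs_fspline_one_le {s : ℕ} (hs : Even s) (hs2 : 2 ≤ s) {y : ℝ} (hy : y ∈ Icc (-1 : ℝ) 1) :
    |fspline s 1 y| ≤ Real.tan (π / (2 * s)) := by
  have hs2r : (2 : ℝ) ≤ s := by exact_mod_cast hs2
  have htan : 0 ≤ Real.tan (π / (2 * s)) := by
    refine Real.tan_nonneg_of_nonneg_of_le_pi_div_two (by positivity) ?_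
    gcongr
    linarith
  have hknot : ∀ j ≤ s, |fspline s 1 (knot s j)| ≤ Real.tan (π / (2 * s)) := by
    intro j hj
    rw [fspline_one_knot hs hs2 hj, abs_mul, abs_neg, abs_pow, abs_neg, abs_one, one_pow, one_mul,
      abs_mul, abs_of_nonneg htan]
    exact mul_le_of_le_one_right htan (Real.abs_sin_le_one _)
  have key : ∀ j ≤ s, ∀ y ∈ Icc (-1 : ℝ) (knot s j), |fspline s 1 y| ≤ Real.tan (π / (2 * s)) := by
    intro j
    induction j with
    | zero =>
      intro hj y hy
      rw [knot_zero] at hy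
      rw [le_antisymm hy.2 hy.1, fspline_succ_neg_one, abs_zero]
      exact htan
    | succ j ih =>
      intro hj y hy
      rcases le_total y (knot s j) with h | h
      · exact ih (by omega) y ⟨hy.1, h⟩
      · have h0 := fspline_one_of_mem hs hj ⟨h, hy.2⟩
        have h1 := fspline_one_of_mem hs hj ⟨knot_le_knot_succ hj, le_rfl⟩
        have b0 := abs_le.1 (hknot j (by omega))
        have b1 := abs_le.1 (hknot (j + 1) hj)
        have := hy.2
        rw [abs_le]
        rcases neg_one_pow_eq_or ℝ j with hp | hp <;> rw [hp] at h0 h1 <;>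
          constructor <;> linarith
  exact key s le_rfl y (by rwa [knot_self (by omega)])

/-- The test function `x ↦ x^l e^{iξx}`. -/
noncomputable def expMonomial (l : ℕ) (ξ : ℝ) (x : ℝ) : ℂ :=
  (x : ℂ) ^ l * Complex.exp (Complex.I * ξ * x)

lemma continuous_expMonomial (l : ℕ) (ξ : ℝ) : Continuous (expMonomial l ξ) := by
  unfold expMonomial; fun_prop

lemma norm_expMonomial (l : ℕ) (ξ x : ℝ) : ‖expMonomial l ξ x‖ = |x| ^ l := by
  rw [expMonomial, norm_mul, norm_pow, Complex.norm_real, Real.norm_eq_abs,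
    show Complex.I * ξ * x = ((ξ * x : ℝ) : ℂ) * Complex.I by push_cast; ring,
    Complex.norm_exp_ofReal_mul_I, mul_one]

lemma norm_expMonomial_le (l : ℕ) (ξ : ℝ) {x : ℝ} (hx : |x| ≤ 1) : ‖expMonomial l ξ x‖ ≤ 1 := by
  rw [norm_expMonomial]
  exact pow_le_one₀ (abs_nonneg x) hx

lemma hasDerivAt_expMonomial (l : ℕ) (ξ x : ℝ) :
    HasDerivAt (expMonomial l ξ)
      (Complex.I * ξ * expMonomial l ξ x + l * expMonomial (l - 1) ξ x) x := by
  have h1 := (Complex.ofRealCLM.hasDerivAt (x := x)).pow l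
  have h2 := ((Complex.ofRealCLM.hasDerivAt (x := x)).const_mul (Complex.I * ξ)).cexp
  convert! h1.mul h2 using 1
  simp only [expMonomial, Complex.ofRealCLM_apply, Complex.ofReal_one, Pi.pow_apply]
  ring

lemma splinePair_expMonomial_succ {s k : ℕ} (hs : Even s) (hk : k + 2 ≤ s) (l : ℕ) (ξ : ℝ) :
    Complex.I * ξ * splinePair s (k + 1) (expMonomial l ξ) +
      l * splinePair s (k + 1) (expMonomial (l - 1) ξ) = -splinePair s k (expMonomial l ξ) := by
  have c1 := continuous_expMonomial l ξ
  have c2 := continuous_expMonomial (l - 1) ξ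
  rw [← splinePair_succ_deriv (by omega) (fspline_succ_one hs hk) (hasDerivAt_expMonomial l ξ)
    (by fun_prop), splinePair_add _ _ (by fun_prop) (by fun_prop), splinePair_const_mul,
    splinePair_const_mul]

lemma splinePair_expMonomial_zero {s : ℕ} (hs : Even s) (hs0 : 0 < s) (l : ℕ) (ξ : ℝ) :
    Complex.I * ξ * splinePair s 0 (expMonomial l ξ) +
      l * splinePair s 0 (expMonomial (l - 1) ξ) = knotSum s (expMonomial l ξ) := by
  have c1 := continuous_expMonomial l ξ
  have c2 := continuous_expMonomial (l - 1) ξ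
  rw [← splinePair_zero_deriv hs hs0 (hasDerivAt_expMonomial l ξ)
    (by fun_prop), splinePair_add _ _ (by fun_prop) (by fun_prop), splinePair_const_mul,
    splinePair_const_mul]

lemma norm_splinePair_le {s k : ℕ} {B : ℝ} (hB : ∀ x ∈ Icc (-1 : ℝ) 1, |fspline s k x| ≤ B)
    (l : ℕ) (ξ : ℝ) : ‖splinePair s k (expMonomial l ξ)‖ ≤ 2 * B := by
  have hB0 : 0 ≤ B := (abs_nonneg _).trans (hB 0 (by norm_num))
  have h := intervalIntegral.norm_integral_le_of_norm_le_const (a := -1) (b := 1) (C := B)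
    (f := fun x => (fspline s k x : ℂ) * expMonomial l ξ x) fun x hx => by
      rw [uIoc_of_le (by norm_num)] at hx
      have hx' : |x| ≤ 1 := abs_le.2 ⟨hx.1.le, hx.2⟩
      rw [norm_mul, Complex.norm_real, Real.norm_eq_abs]
      exact (mul_le_mul (hB x ⟨hx.1.le, hx.2⟩) (norm_expMonomial_le l ξ hx') (norm_nonneg _)
        hB0).trans_eq (mul_one B)
  refine h.trans_eq ?_
  norm_num
  ring

lemma pow_mul_splinePair_zero {s : ℕ} (hs : Even s) (ξ : ℝ) {k : ℕ} (hk : k + 1 ≤ s) :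
    (Complex.I * ξ) ^ (k + 1) * splinePair s k (expMonomial 0 ξ) =
      (-1) ^ k * knotSum s (expMonomial 0 ξ) := by
  induction k with
  | zero =>
    have := splinePair_expMonomial_zero hs (by omega) 0 ξ
    simp only [Nat.cast_zero, zero_mul, add_zero] at this
    simpa using this
  | succ k ih =>
    have := splinePair_expMonomial_succ hs hk 0 ξ
    simp only [Nat.cast_zero, zero_mul, add_zero] at this
    rw [pow_succ, mul_assoc, this, mul_neg, ih (by omega), pow_succ]
    ring

lemma pow_mul_splinePair_succ {s : ℕ} (hs : Even s) (ξ : ℝ) {k : ℕ} (hk : k + 2 ≤ s) :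
    (Complex.I * ξ) ^ k * splinePair s (k + 1) (expMonomial 0 ξ) =
      (-1) ^ k * splinePair s 1 (expMonomial 0 ξ) := by
  induction k with
  | zero => simp
  | succ k ih =>
    have := splinePair_expMonomial_succ hs hk 0 ξ
    simp only [Nat.cast_zero, zero_mul, add_zero] at this
    rw [pow_succ, mul_assoc, this, mul_neg, ih (by omega), pow_succ]
    ring

lemma pow_mul_splinePair_one {s : ℕ} (hs : Even s) (ξ : ℝ) {k : ℕ} (hk : k + 1 ≤ s) :
    (Complex.I * ξ) ^ k * splinePair s k (expMonomial 1 ξ) =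
      (-1) ^ k * (splinePair s 0 (expMonomial 1 ξ) + k * splinePair s 1 (expMonomial 0 ξ)) := by
  induction k with
  | zero => simp
  | succ k ih =>
    have h1 := splinePair_expMonomial_succ hs hk 1 ξ
    have h0 := pow_mul_splinePair_succ hs ξ hk
    simp only [Nat.cast_one, one_mul, Nat.sub_self] at h1
    rw [pow_succ, pow_succ, mul_assoc]
    push_cast
    linear_combination (Complex.I * ξ) ^ k * h1 - h0 - ih (by omega)

lemma pow_mul_splinePair_one' {s : ℕ} (hs : Even s) (ξ : ℝ) {k : ℕ} (hk : k + 1 ≤ s) (hs2 : 2 ≤ s) :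
    (Complex.I * ξ) ^ (k + 1) * splinePair s k (expMonomial 1 ξ) =
      (-1) ^ k * (knotSum s (expMonomial 1 ξ) - (k + 1) * splinePair s 0 (expMonomial 0 ξ)) := by
  have h := pow_mul_splinePair_one hs ξ hk
  have h1 := splinePair_expMonomial_zero hs (by omega) 1 ξ
  have h2 := splinePair_expMonomial_succ hs (k := 0) hs2 0 ξ
  simp only [Nat.cast_one, one_mul, Nat.sub_self, Nat.cast_zero, zero_mul, add_zero,
    zero_add] at h1 h2
  rw [pow_succ]
  linear_combination (Complex.I * ξ) * h + (-1) ^ k * h1 + (-1) ^ k * k * h2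

lemma pow_mul_splinePair_two {s : ℕ} (hs : Even s) (ξ : ℝ) {k : ℕ} (hk : k + 1 ≤ s) :
    (Complex.I * ξ) ^ (k + 1) * splinePair s k (expMonomial 2 ξ) =
      (-1) ^ k * (knotSum s (expMonomial 2 ξ) - 2 * (k + 1) * splinePair s 0 (expMonomial 1 ξ)
        - k * (k + 1) * splinePair s 1 (expMonomial 0 ξ)) := by
  induction k with
  | zero =>
    have h := splinePair_expMonomial_zero hs (by omega) 2 ξ
    norm_num at h ⊢
    linear_combination h
  | succ k ih =>
    have h1 := splinePair_expMonomial_succ hs hk 2 ξ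
    have h0 := pow_mul_splinePair_one hs ξ hk
    norm_num at h1 h0 ⊢
    rw [pow_succ _ (k + 1), pow_succ _ k]
    rw [pow_succ, pow_succ _ k] at h0
    have ih' := ih (by omega)
    rw [pow_succ] at ih'
    linear_combination (Complex.I * ξ) ^ k * (Complex.I * ξ) * h1 - 2 * h0 - ih'

lemma abs_pow_mul_norm_of_eq {s k : ℕ} {ξ : ℝ} {w v : ℂ} {B : ℝ}
    (h : (Complex.I * ξ) ^ s * w = (-1) ^ k * v) (hv : ‖v‖ ≤ B) : |ξ| ^ s * ‖w‖ ≤ B := by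
  have := congrArg norm h
  simp only [norm_mul, norm_pow, Complex.norm_I, one_mul, Complex.norm_real, norm_neg, norm_one,
    one_pow, Real.norm_eq_abs] at this
  rwa [this]

lemma tan_pi_div_le {s : ℕ} (hs : 6 ≤ s) : s * Real.tan (π / (2 * s)) ≤ 2 := by
  have hsr : (6 : ℝ) ≤ s := by exact_mod_cast hs
  have hx0 : 0 < π / (2 * s) := by positivity
  have hx1 : π / (2 * s) ≤ 0.3 := by
    rw [div_le_iff₀ (by positivity)]
    nlinarith [Real.pi_lt_d2]
  set y := π / (2 * s) with hy
  have hsy : s * y = π / 2 := by rw [hy]; field_simp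
  have hc : 0.95 ≤ Real.cos y := by nlinarith [Real.one_sub_sq_div_two_le_cos (x := y)]
  rw [Real.tan_eq_sin_div_cos, mul_div_assoc', div_le_iff₀ (by linarith)]
  nlinarith [Real.sin_le hx0.le, Real.pi_lt_d2]

/-- Decay constants of the Fourier transform of `x^l g_{s-1}`. -/
def decayConst : ℕ → ℝ
  | 0 => 1
  | 1 => 2
  | _ => 5

/-- The Fourier transform of `x^l g_{s-1}` decays like `|ξ|^(-s)`. -/
lemma abs_pow_mul_norm_splinePair_le {s : ℕ} (hs : Even s) (hs6 : 6 ≤ s) {l : ℕ} (hl : l ≤ 2)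
    (ξ : ℝ) : |ξ| ^ s * ‖splinePair s (s - 1) (expMonomial l ξ)‖ ≤ 2 * s * decayConst l := by
  have hsr : (6 : ℝ) ≤ s := by exact_mod_cast hs6
  have hk : s - 1 + 1 = s := by omega
  have hkc : ((s - 1 : ℕ) : ℂ) + 1 = s := by exact_mod_cast hk
  have hK : ∀ l, ‖knotSum s (expMonomial l ξ)‖ ≤ 2 * s := fun l =>
    norm_knotSum_le s fun x hx => norm_expMonomial_le l ξ hx
  have hL0 : ∀ l, ‖splinePair s 0 (expMonomial l ξ)‖ ≤ 2 * 1 := fun l =>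
    norm_splinePair_le (fun x _ => abs_fspline_zero_le s x) l ξ
  have hL1 : ‖splinePair s 1 (expMonomial 0 ξ)‖ ≤ 2 * Real.tan (π / (2 * s)) :=
    norm_splinePair_le (fun x hx => abs_fspline_one_le hs (by omega) hx) 0 ξ
  interval_cases l
  · have h := pow_mul_splinePair_zero hs ξ (k := s - 1) (by omega)
    rw [hk] at h
    simpa [decayConst] using abs_pow_mul_norm_of_eq h (hK 0)
  · have h := pow_mul_splinePair_one' hs ξ (k := s - 1) (by omega) (by omega)
    rw [hk, hkc] at h
    refine (abs_pow_mul_norm_of_eq h (B := 2 * s + s * (2 * 1)) ?_).trans_eq ?_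
    · refine (norm_sub_le _ _).trans ?_
      rw [norm_mul, Complex.norm_natCast]
      gcongr
      exacts [hK 1, hL0 0]
    · simp only [decayConst]; ring
  · have h := pow_mul_splinePair_two hs ξ (k := s - 1) (by omega)
    rw [hk, hkc] at h
    refine (abs_pow_mul_norm_of_eq h
      (B := 2 * s + 2 * s * (2 * 1) + (s - 1 : ℕ) * s * (2 * Real.tan (π / (2 * s)))) ?_).trans ?_
    · refine (norm_sub_le _ _).trans (add_le_add ((norm_sub_le _ _).trans (add_le_add (hK 2) ?_)) ?_)
      · rw [norm_mul, norm_mul, Complex.norm_natCast]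
        norm_num
        have := hL0 1
        nlinarith
      · rw [norm_mul, norm_mul, Complex.norm_natCast, Complex.norm_natCast]
        gcongr
    · simp only [decayConst]
      have h2 := tan_pi_div_le hs6
      have h3 : ((s - 1 : ℕ) : ℝ) ≤ s := by exact_mod_cast Nat.sub_le s 1
      have h4 : 0 ≤ Real.tan (π / (2 * s)) := by linarith [norm_nonneg _ |>.trans hL1]
      nlinarith [mul_le_mul_of_nonneg_right h3 (by positivity : 0 ≤ s * Real.tan (π / (2 * s)))]

/-- The perfect B-spline, extended by zero outside `[-1,1]`. -/
noncomputable def splineExt (s : ℕ) (x : ℝ) : ℝ := fspline s (s - 1) (max (-1) (min 1 x))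

lemma splineExt_of_mem (s : ℕ) {x : ℝ} (hx : x ∈ Icc (-1 : ℝ) 1) :
    splineExt s x = fspline s (s - 1) x := by
  rw [splineExt, min_eq_right hx.2, max_eq_right hx.1]

lemma continuous_splineExt {s : ℕ} (hs : 2 ≤ s) : Continuous (splineExt s) := by
  obtain ⟨k, rfl⟩ : ∃ k, s = k + 2 := ⟨s - 2, by omega⟩
  exact (continuous_fspline_succ (k + 2) k).comp (by fun_prop)

lemma splineExt_eq_zero {s : ℕ} (hs : Even s) (hs2 : 2 ≤ s) {x : ℝ} (hx : 1 ≤ |x|) :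
    splineExt s x = 0 := by
  obtain ⟨k, rfl⟩ : ∃ k, s = k + 2 := ⟨s - 2, by omega⟩
  rw [splineExt, show k + 2 - 1 = k + 1 by omega]
  rcases le_abs.1 hx with h | h
  · rw [min_eq_left h, max_eq_right (by norm_num), fspline_succ_one hs le_rfl]
  · rw [min_eq_right (by linarith), max_eq_left (by linarith), fspline_succ_neg_one]

/-- The `l`-th derivative, up to a power of `i`, of the unnormalised kernel. -/
noncomputable def momentSum (s N l : ℕ) (t : ℝ) : ℂ :=
  ∑ k ∈ Finset.Icc (-(N : ℤ)) (N : ℤ),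
    (k : ℂ) ^ l * (gtilde s ((k : ℝ) / (2 * ((N : ℝ) + 1))) : ℂ) *
      Complex.exp ((k : ℂ) * t * Complex.I)

/-- The compactly supported function whose integer samples make up `momentSum`. -/
noncomputable def momentFun (s N l : ℕ) (t x : ℝ) : ℂ :=
  (x : ℂ) ^ l * (splineExt s (x / (N + 1)) : ℂ) * Complex.exp ((x : ℂ) * t * Complex.I)

lemma continuous_momentFun {s : ℕ} (hs : 2 ≤ s) (N l : ℕ) (t : ℝ) :
    Continuous (momentFun s N l t) := by
  have := continuous_splineExt hs
  unfold momentFun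
  fun_prop

lemma momentFun_eq_zero {s : ℕ} (hs : Even s) (hs2 : 2 ≤ s) (N l : ℕ) (t : ℝ) {x : ℝ}
    (hx : (N : ℝ) + 1 ≤ |x|) : momentFun s N l t x = 0 := by
  have hN : (0 : ℝ) < N + 1 := by positivity
  rw [momentFun, splineExt_eq_zero hs hs2]
  · simp
  · rwa [abs_div, abs_of_pos hN, le_div_iff₀ hN, one_mul]

lemma tsum_momentFun {s : ℕ} (hs : Even s) (hs2 : 2 ≤ s) (N l : ℕ) (t : ℝ) :
    ∑' k : ℤ, momentFun s N l t k = momentSum s N l t := by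
  have hN : (0 : ℝ) < N + 1 := by positivity
  rw [tsum_eq_sum (s := Finset.Icc (-(N : ℤ)) (N : ℤ)), momentSum]
  · refine Finset.sum_congr rfl fun k hk => ?_
    rw [Finset.mem_Icc] at hk
    have h1 : -(N : ℝ) ≤ k := by exact_mod_cast hk.1
    have h2 : (k : ℝ) ≤ N := by exact_mod_cast hk.2
    rw [momentFun, splineExt_of_mem, gtilde]
    · rw [show 2 * ((k : ℝ) / (2 * ((N : ℝ) + 1))) = k / (N + 1) by field_simp]
      simp
    · rw [mem_Icc, le_div_iff₀ hN, div_le_iff₀ hN]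
      constructor <;> linarith
  · intro k hk
    refine momentFun_eq_zero hs hs2 N l t ?_
    rw [Finset.mem_Icc, ← abs_le, not_le] at hk
    exact_mod_cast hk

lemma fourier_momentFun {s : ℕ} (hs : Even s) (hs2 : 2 ≤ s) (N l : ℕ) (t : ℝ) (m : ℤ) :
    FourierTransform.fourier (momentFun s N l t) m =
      ((N : ℂ) + 1) ^ (l + 1) *
        splinePair s (s - 1) (expMonomial l ((N + 1) * (t - 2 * π * m))) := by
  have hN : (0 : ℝ) < N + 1 := by positivity
  have hNc : (N : ℂ) + 1 ≠ 0 := by exact_mod_cast N.succ_ne_zero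
  rw [Real.fourier_real_eq_integral_exp_smul]
  set G : ℝ → ℂ := fun y => ((N : ℂ) + 1) ^ l * ((splineExt s y : ℂ) *
    expMonomial l ((N + 1) * (t - 2 * π * m)) y) with hG
  have h1 : ∀ v : ℝ, Complex.exp (↑(-2 * π * v * m) * Complex.I) • momentFun s N l t v =
      G (v / (N + 1)) := by
    intro v
    simp only [hG, momentFun, expMonomial, smul_eq_mul]
    have e : Complex.exp (Complex.I * (((N + 1) * (t - 2 * π * m) : ℝ) : ℂ) * (v / (N + 1) : ℝ)) =
        Complex.exp (↑(-2 * π * v * m) * Complex.I) * Complex.exp ((v : ℂ) * t * Complex.I) := by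
      rw [← Complex.exp_add]
      congr 1
      push_cast
      field_simp
      ring
    rw [e]
    push_cast
    rw [div_pow]
    field_simp
  rw [integral_congr_ae (.of_forall h1), Measure.integral_comp_div G, hG, abs_of_pos hN, integral_const_mul, splinePair,
    ← intervalIntegral.integral_eq_integral_of_support_subset (a := -1) (b := 1)]
  · rw [intervalIntegral.integral_congr (g := fun x => (fspline s (s - 1) x : ℂ) *
      expMonomial l ((N + 1) * (t - 2 * π * m)) x)]
    · rw [Complex.real_smul]
      push_cast
      ring
    · intro x hx
      rw [uIcc_of_le (by norm_num)] at hx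
      simp only [splineExt_of_mem s hx]
  · intro x hx
    by_contra hx'
    refine hx ?_
    have : 1 ≤ |x| := by
      by_contra! h
      exact hx' ⟨(abs_lt.1 h).1, (abs_lt.1 h).2.le⟩
    simp [splineExt_eq_zero hs hs2 this]

/-- Poisson summation for the kernel and its derivatives. -/
lemma momentSum_eq_tsum {s : ℕ} (hs : Even s) (hs2 : 2 ≤ s) (N l : ℕ) (t : ℝ)
    (hsum : Summable fun m : ℤ =>
      splinePair s (s - 1) (expMonomial l ((N + 1) * (t - 2 * π * m)))) :
    momentSum s N l t = ((N : ℂ) + 1) ^ (l + 1) *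
      ∑' m : ℤ, splinePair s (s - 1) (expMonomial l ((N + 1) * (t - 2 * π * m))) := by
  have hO : momentFun s N l t =O[Filter.cocompact ℝ] fun x : ℝ => |x| ^ (-(2 : ℝ)) := by
    refine Filter.EventuallyEq.trans_isBigO (f₂ := fun _ => (0 : ℂ)) ?_
      (Asymptotics.isBigO_zero _ _)
    filter_upwards [(isCompact_Icc (a := -((N : ℝ) + 1)) (b := N + 1)).compl_mem_cocompact] with x hx
    refine momentFun_eq_zero hs hs2 N l t ?_
    rw [mem_compl_iff, mem_Icc, ← abs_le, not_le] at hx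
    exact hx.le
  have h := Real.tsum_eq_tsum_fourier_of_rpow_decay_of_summable
    (continuous_momentFun hs2 N l t) (by norm_num) hO
    (by simpa only [fourier_momentFun hs hs2] using hsum.mul_left _) 0
  simp only [zero_add, fourier_momentFun hs hs2] at h
  rw [tsum_momentFun hs hs2] at h
  rw [h, ← tsum_mul_left]
  simp

lemma sum_range_one_div_sq_le (n : ℕ) :
    ∑ i ∈ Finset.range n, (1 : ℝ) / ((i : ℝ) + 1) ^ 2 ≤ 2 := by
  have key : ∀ n : ℕ, ∑ i ∈ Finset.range (n + 1), (1 : ℝ) / ((i : ℝ) + 1) ^ 2 ≤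
      2 - 1 / ((n : ℝ) + 1) := by
    intro n
    induction n with
    | zero => norm_num
    | succ n ih =>
      rw [Finset.sum_range_succ]
      have : (1 : ℝ) / (((n + 1 : ℕ) : ℝ) + 1) ^ 2 ≤
          1 / ((n : ℝ) + 1) - 1 / (((n + 1 : ℕ) : ℝ) + 1) := by
        push_cast
        rw [div_sub_div _ _ (by positivity) (by positivity),
          div_le_div_iff₀ (by positivity) (by positivity)]
        have : (0 : ℝ) ≤ n := by positivity
        nlinarith
      linarith
  cases n with
  | zero => norm_num
  | succ n => exact (key n).trans (by have : (0 : ℝ) ≤ 1 / ((n : ℝ) + 1) := by positivity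
                                      linarith)

lemma summable_and_norm_tsum_le_of_le_div_sq {F : ℕ → ℂ} {c : ℝ}
    (hF : ∀ n : ℕ, ‖F n‖ ≤ c / ((n : ℝ) + 1) ^ 2) : Summable F ∧ ‖∑' n, F n‖ ≤ 2 * c := by
  have hc : 0 ≤ c := by simpa using (norm_nonneg _).trans (hF 0)
  have hs : Summable fun n : ℕ => c / ((n : ℝ) + 1) ^ 2 := by
    have h := (summable_nat_add_iff 1).2 (Real.summable_one_div_nat_pow.2 (by norm_num : 1 < 2))
    simpa [div_eq_mul_inv] using h.mul_left c
  refine ⟨Summable.of_norm_bounded hs hF, (tsum_of_norm_bounded hs.hasSum hF).trans ?_⟩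
  refine Real.tsum_le_of_sum_range_le (fun n => by positivity) fun n => ?_
  have h := mul_le_mul_of_nonneg_left (sum_range_one_div_sq_le n) hc
  rw [Finset.mul_sum] at h
  simp only [mul_one_div] at h
  linarith

lemma summable_int_and_norm_tsum_sub_le {F : ℤ → ℂ} {c : ℝ}
    (hp : ∀ n : ℕ, ‖F (n + 2)‖ ≤ c / ((n : ℝ) + 1) ^ 2)
    (hn : ∀ n : ℕ, ‖F (-(n + 1))‖ ≤ c / ((n : ℝ) + 1) ^ 2) :
    Summable F ∧ ‖∑' m, F m - F 0 - F 1‖ ≤ 4 * c := by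
  obtain ⟨s1, b1⟩ := summable_and_norm_tsum_le_of_le_div_sq hp
  obtain ⟨s2, b2⟩ := summable_and_norm_tsum_le_of_le_div_sq hn
  have s3 : Summable fun n : ℕ => F n := (summable_nat_add_iff 2).1 (by simpa using s1)
  refine ⟨Summable.of_nat_of_neg_add_one s3 s2, ?_⟩
  rw [tsum_of_nat_of_neg_add_one s3 s2, ← s3.sum_add_tsum_nat_add 2]
  simp only [Finset.sum_range_succ, Finset.range_zero, Finset.sum_empty, zero_add, Nat.cast_zero,
    Nat.cast_one, Nat.cast_add, Nat.cast_ofNat]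
  rw [show ∀ a b c d : ℂ, a + b + c + d - a - b = c + d by intros; ring]
  refine (norm_add_le _ _).trans ?_
  linarith

lemma decayConst_nonneg (l : ℕ) : 0 ≤ decayConst l := by
  unfold decayConst; split <;> norm_num

lemma norm_splinePair_expMonomial_le {s : ℕ} (hs : Even s) (hs6 : 6 ≤ s) {l : ℕ} (hl : l ≤ 2)
    {ξ η r : ℝ} (hη : 0 < η) (hr : 0 < r) (h : r * η ≤ |ξ|) :
    ‖splinePair s (s - 1) (expMonomial l ξ)‖ ≤ 2 * s * decayConst l / η ^ s / r ^ s := by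
  have h1 := abs_pow_mul_norm_splinePair_le hs hs6 hl ξ
  rw [div_div, le_div_iff₀ (by positivity), ← mul_pow, mul_comm η r]
  refine le_trans ?_ h1
  rw [mul_comm]
  gcongr

lemma inv_pow_le_div_sq {s : ℕ} (hs6 : 6 ≤ s) (n : ℕ) {r c : ℝ} (hc : 0 ≤ c) (h : (n : ℝ) + 1 ≤ r) :
    c / r ^ s ≤ c / ((n : ℝ) + 1) ^ 2 := by
  have hn : (0 : ℝ) ≤ n := by positivity
  gcongr
  exact (pow_le_pow_left₀ (by positivity) h 2).trans (pow_le_pow_right₀ (by linarith) (by omega))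

lemma inv_odd_pow_le_div_sq {s : ℕ} (hs6 : 6 ≤ s) (n : ℕ) {c : ℝ} (hc : 0 ≤ c) :
    c / (2 * (n : ℝ) + 3) ^ s ≤ c / 81 / ((n : ℝ) + 1) ^ 2 := by
  have hn : (0 : ℝ) ≤ n := by positivity
  rw [div_div]
  gcongr
  calc 81 * ((n : ℝ) + 1) ^ 2 ≤ (2 * (n : ℝ) + 3) ^ 4 * (2 * (n : ℝ) + 3) ^ 2 := by
        gcongr
        · calc (81 : ℝ) = 3 ^ 4 := by norm_num
            _ ≤ _ := by gcongr; linarith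
        · linarith
        · norm_num
    _ = (2 * (n : ℝ) + 3) ^ 6 := by ring
    _ ≤ _ := pow_le_pow_right₀ (by linarith) hs6

/-- Localisation of the unnormalised kernel and its derivatives. -/
lemma norm_momentSum_le {s : ℕ} (hs : Even s) (hs6 : 6 ≤ s) (N : ℕ) {l : ℕ} (hl : l ≤ 2)
    {t : ℝ} (ht : 0 < t) (htπ : t ≤ π) :
    ‖momentSum s N l t‖ ≤ ((N : ℝ) + 1) ^ (l + 1) *
      (2.05 * (2 * s * decayConst l / (((N : ℝ) + 1) * t) ^ s)) := by
  have hN : (0 : ℝ) < N + 1 := by positivity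
  have hη : 0 < ((N : ℝ) + 1) * t := by positivity
  set B := 2 * s * decayConst l / (((N : ℝ) + 1) * t) ^ s with hB
  have hB0 : 0 ≤ B := by have := decayConst_nonneg l; positivity
  set F : ℤ → ℂ := fun m => splinePair s (s - 1) (expMonomial l ((N + 1) * (t - 2 * π * m)))
    with hF
  have hbd : ∀ (m : ℤ) (r : ℝ), 0 < r → r * t ≤ |t - 2 * π * m| → ‖F m‖ ≤ B / r ^ s := by
    intro m r hr h
    refine norm_splinePair_expMonomial_le hs hs6 hl hη hr ?_
    rw [abs_mul, abs_of_pos hN]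
    nlinarith
  have hF0 : ‖F 0‖ ≤ B := by
    simpa using hbd 0 1 one_pos (by simp [abs_of_pos ht])
  have hF1 : ‖F 1‖ ≤ B := by
    simpa using hbd 1 1 one_pos (by rw [le_abs]; right; push_cast; linarith)
  obtain ⟨h1, h2⟩ := summable_int_and_norm_tsum_sub_le (F := F) (c := B / 81)
    (fun n => (hbd _ (2 * n + 3) (by positivity) (by
      rw [le_abs]; right; push_cast
      have : (0 : ℝ) ≤ n := by positivity
      nlinarith)).trans (inv_odd_pow_le_div_sq hs6 n hB0))
    (fun n => (hbd _ (2 * n + 3) (by positivity) (by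
      rw [le_abs]; left; push_cast
      have : (0 : ℝ) ≤ n := by positivity
      nlinarith)).trans (inv_odd_pow_le_div_sq hs6 n hB0))
  rw [momentSum_eq_tsum hs (by omega) N l t h1, norm_mul, norm_pow]
  have e : ‖(N : ℂ) + 1‖ = (N : ℝ) + 1 := by
    rw [← Nat.cast_succ, Complex.norm_natCast]; push_cast; ring
  rw [e]
  gcongr
  have h3 : ‖∑' m, F m‖ ≤ ‖∑' m, F m - F 0 - F 1‖ + ‖F 0‖ + ‖F 1‖ := by
    calc ‖∑' m, F m‖ = ‖(∑' m, F m - F 0 - F 1) + F 0 + F 1‖ := by congr 1; ring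
      _ ≤ _ := norm_add₃_le
  linarith

/-- The unnormalised moments at the origin agree with the spline moments up to a tiny error. -/
lemma norm_momentSum_zero_sub_le {s : ℕ} (hs : Even s) (hs6 : 6 ≤ s) (N : ℕ) {l : ℕ}
    (hl : l ≤ 2) :
    ‖momentSum s N l 0 - ((N : ℂ) + 1) ^ (l + 1) * splinePair s (s - 1) (fun x => (x : ℂ) ^ l)‖ ≤
      ((N : ℝ) + 1) ^ (l + 1) * (5 * (2 * s * decayConst l / (2 * π * ((N : ℝ) + 1)) ^ s)) := by
  have hN : (0 : ℝ) < N + 1 := by positivity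
  have hη : 0 < 2 * π * ((N : ℝ) + 1) := by positivity
  set B := 2 * s * decayConst l / (2 * π * ((N : ℝ) + 1)) ^ s with hB
  have hB0 : 0 ≤ B := by have := decayConst_nonneg l; positivity
  set F : ℤ → ℂ := fun m => splinePair s (s - 1) (expMonomial l ((N + 1) * ((0 : ℝ) - 2 * π * m)))
    with hF
  have hbd : ∀ (m : ℤ) (r : ℝ), 0 < r → r ≤ |(m : ℝ)| → ‖F m‖ ≤ B / r ^ s := by
    intro m r hr h
    refine norm_splinePair_expMonomial_le hs hs6 hl hη hr ?_
    rw [zero_sub, abs_mul, abs_of_pos hN, abs_neg, abs_mul, abs_of_pos (by positivity)]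
    nlinarith [mul_le_mul_of_nonneg_left h hη.le]
  have hF0 : F 0 = splinePair s (s - 1) (fun x => (x : ℂ) ^ l) := by
    simp only [hF]
    congr 1 with x
    simp [expMonomial]
  have hF1 : ‖F 1‖ ≤ B := by
    simpa using hbd 1 1 one_pos (by simp)
  obtain ⟨h1, h2⟩ := summable_int_and_norm_tsum_sub_le (F := F) (c := B)
    (fun n => (hbd _ (n + 2) (by positivity) (by
      rw [le_abs]; left; push_cast; linarith)).trans (inv_pow_le_div_sq hs6 n hB0 (by linarith)))
    (fun n => (hbd _ (n + 1) (by positivity) (by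
      rw [le_abs]; right; push_cast; linarith)).trans (inv_pow_le_div_sq hs6 n hB0 (by linarith)))
  rw [momentSum_eq_tsum hs (by omega) N l 0 h1, ← hF0, ← mul_sub, norm_mul, norm_pow]
  have e : ‖(N : ℂ) + 1‖ = (N : ℝ) + 1 := by
    rw [← Nat.cast_succ, Complex.norm_natCast]; push_cast; ring
  rw [e]
  gcongr
  have h3 : ‖∑' m, F m - F 0‖ ≤ ‖∑' m, F m - F 0 - F 1‖ + ‖F 1‖ := by
    calc ‖∑' m, F m - F 0‖ = ‖(∑' m, F m - F 0 - F 1) + F 1‖ := by congr 1; ring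
      _ ≤ _ := norm_add_le _ _
  linarith

lemma factorial_mul_self_le_pow {s : ℕ} (hs : 1 ≤ s) : s.factorial * s ≤ s ^ s := by
  obtain ⟨n, rfl⟩ : ∃ n, s = n + 1 := ⟨s - 1, by omega⟩
  have key : ∀ n : ℕ, (n + 1).factorial ≤ (n + 1) ^ n := by
    intro n
    induction n with
    | zero => simp
    | succ n ih =>
      rw [Nat.factorial_succ, pow_succ, mul_comm]
      exact Nat.mul_le_mul_right _ (ih.trans (Nat.pow_le_pow_left (by omega) n))
  rw [pow_succ]
  exact Nat.mul_le_mul_right _ (key n)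

lemma factorial_mul_le_two_pi_pow {s N : ℕ} (hs6 : 6 ≤ s) (hN : 2 * s ≤ N) :
    46656 * (s * (2 ^ s * s.factorial)) ≤ (2 * π * ((N : ℝ) + 1)) ^ s := by
  have hNr : 2 * (s : ℝ) ≤ N := by exact_mod_cast hN
  have h1 : ((s.factorial : ℝ) * s) ≤ s ^ s := by
    exact_mod_cast factorial_mul_self_le_pow (by omega)
  have h6 : (46656 : ℝ) ≤ 6 ^ s := by
    calc (46656 : ℝ) = 6 ^ 6 := by norm_num
      _ ≤ 6 ^ s := pow_le_pow_right₀ (by norm_num) hs6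
  calc 46656 * (s * (2 ^ s * s.factorial)) = 46656 * 2 ^ s * ((s.factorial : ℝ) * s) := by ring
    _ ≤ 6 ^ s * 2 ^ s * s ^ s := by gcongr
    _ = (12 * (s : ℝ)) ^ s := by rw [← mul_pow, ← mul_pow]; norm_num
    _ ≤ _ := by
      have : (0 : ℝ) ≤ s := by positivity
      refine pow_le_pow_left₀ (by positivity) ?_ s
      nlinarith [Real.pi_gt_three]

lemma momentSum_zero_zero (s N : ℕ) : momentSum s N 0 0 = gnorm s N := by
  simp [momentSum, gnorm]

lemma ten_mul_div_le {s N : ℕ} (hs6 : 6 ≤ s) (hN : 2 * s ≤ N) {c : ℝ} (hc : 0 ≤ c) :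
    5 * (2 * s * c / (2 * π * ((N : ℝ) + 1)) ^ s) ≤ c * splineMass s / (18000 * s) := by
  have h := factorial_mul_le_two_pi_pow hs6 hN
  have hsr : (0 : ℝ) < s := by positivity
  calc 5 * (2 * s * c / (2 * π * ((N : ℝ) + 1)) ^ s)
      ≤ 5 * (2 * s * c / (46656 * (s * (2 ^ s * s.factorial)))) := by gcongr
    _ = c * splineMass s / (18662.4 * s) := by
        unfold splineMass
        field_simp
        norm_num
        ring
    _ ≤ _ := by
        have := splineMass_pos (s := s) (by omega)
        gcongr
        norm_num

lemma abs_gnorm_sub_le {s N : ℕ} (hs : Even s) (hs6 : 6 ≤ s) (hN : 2 * s ≤ N) :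
    |gnorm s N - ((N : ℝ) + 1) * splineMass s| ≤ ((N : ℝ) + 1) * splineMass s / 10000 := by
  have h := norm_momentSum_zero_sub_le hs hs6 N (l := 0) (by norm_num)
  simp only [pow_zero, zero_add, pow_one] at h
  rw [momentSum_zero_zero, splinePair_mass hs (by omega)] at h
  have e : (gnorm s N : ℂ) - ((N : ℂ) + 1) * splineMass s =
    ((gnorm s N - ((N : ℝ) + 1) * splineMass s : ℝ) : ℂ) := by push_cast; ring
  rw [e, Complex.norm_real, Real.norm_eq_abs] at h
  refine h.trans ?_
  rw [mul_div_assoc ((N : ℝ) + 1)]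
  refine mul_le_mul_of_nonneg_left ?_ (by positivity)
  refine (ten_mul_div_le hs6 hN (decayConst_nonneg 0)).trans ?_
  have := splineMass_pos (s := s) (by omega)
  have hsr : (6 : ℝ) ≤ s := by exact_mod_cast hs6
  simp only [decayConst, one_mul]
  gcongr
  linarith

lemma gnorm_ge {s N : ℕ} (hs : Even s) (hs6 : 6 ≤ s) (hN : 2 * s ≤ N) :
    0.9999 * (((N : ℝ) + 1) * splineMass s) ≤ gnorm s N := by
  have := (abs_le.1 (abs_gnorm_sub_le hs hs6 hN)).1
  linarith

lemma gnorm_pos {s N : ℕ} (hs : Even s) (hs6 : 6 ≤ s) (hN : 2 * s ≤ N) : 0 < gnorm s N := by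
  refine lt_of_lt_of_le ?_ (gnorm_ge hs hs6 hN)
  have := splineMass_pos (s := s) (by omega)
  positivity

/-- The `l`-th derivative of the trigonometric kernel. -/
noncomputable def sigmaD (s N l : ℕ) (t : ℝ) : ℝ :=
  ((1 / (gnorm s N : ℂ)) * (Complex.I ^ l * momentSum s N l t)).re

lemma sigmaD_zero (s N : ℕ) : sigmaD s N 0 = sigmaT s N := by
  funext t
  simp [sigmaD, sigmaT, momentSum]

lemma hasDerivAt_sigmaD (s N l : ℕ) (t : ℝ) :
    HasDerivAt (sigmaD s N l) (sigmaD s N (l + 1) t) t := by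
  have h : HasDerivAt (fun t : ℝ => (1 / (gnorm s N : ℂ)) * (Complex.I ^ l * momentSum s N l t))
      ((1 / (gnorm s N : ℂ)) * (Complex.I ^ (l + 1) * momentSum s N (l + 1) t)) t := by
    have h1 : HasDerivAt (momentSum s N l) (Complex.I * momentSum s N (l + 1) t) t := by
      unfold momentSum
      rw [Finset.mul_sum]
      refine HasDerivAt.fun_sum fun k _ => ?_
      have h2 := (((Complex.ofRealCLM.hasDerivAt (x := t)).const_mul (k : ℂ)).mul_const
        Complex.I).cexp.const_mul
          ((k : ℂ) ^ l * (gtilde s ((k : ℝ) / (2 * ((N : ℝ) + 1))) : ℂ))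
      convert! h2 using 1
      simp only [Complex.ofRealCLM_apply, Complex.ofReal_one]
      ring
    convert! (h1.const_mul (Complex.I ^ l)).const_mul (1 / (gnorm s N : ℂ)) using 1
    ring
  exact (Complex.reCLM.hasFDerivAt.comp_hasDerivAt t h :)

lemma abs_sigmaD_le {s N : ℕ} (hs : Even s) (hs6 : 6 ≤ s) (hN : 2 * s ≤ N) {l : ℕ} (hl : l ≤ 2)
    {t : ℝ} (ht : 0 < t) (htπ : t ≤ π) :
    |sigmaD s N l t| ≤ 1.03 * (2 ^ s * s.factorial) * decayConst l * ((N : ℝ) + 1) ^ l /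
      (((N : ℝ) + 1) * t) ^ s := by
  have hN0 : (0 : ℝ) < N + 1 := by positivity
  have hsr : (0 : ℝ) < s := by positivity
  have hg := gnorm_pos hs hs6 hN
  have hg' := gnorm_ge hs hs6 hN
  have hD := decayConst_nonneg l
  have h1 : |sigmaD s N l t| ≤ ‖momentSum s N l t‖ / gnorm s N := by
    refine (Complex.abs_re_le_norm _).trans_eq ?_
    rw [norm_mul, norm_mul, norm_pow, Complex.norm_I, one_pow, one_mul, norm_div, norm_one,
      Complex.norm_real, Real.norm_eq_abs, abs_of_pos hg]
    ring
  refine h1.trans ?_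
  rw [div_le_iff₀ hg]
  refine (norm_momentSum_le hs hs6 N hl ht htπ).trans ?_
  refine le_trans ?_ (mul_le_mul_of_nonneg_left hg' (by positivity))
  unfold splineMass
  have hp : (0 : ℝ) < (((N : ℝ) + 1) * t) ^ s := by positivity
  rw [pow_succ]
  set q := (((N : ℝ) + 1) * t) ^ s
  have hf : (0 : ℝ) < s.factorial := by positivity
  rw [show 1.03 * (2 ^ s * (s.factorial : ℝ)) * decayConst l * ((N : ℝ) + 1) ^ l / q *
    (0.9999 * (((N : ℝ) + 1) * (4 * s / (2 ^ s * s.factorial)))) =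
    (1.03 * 0.9999 * 4) * (((N : ℝ) + 1) ^ l * (N + 1) * (s * decayConst l / q)) by field_simp,
    show ((N : ℝ) + 1) ^ l * (N + 1) * (2.05 * (2 * s * decayConst l / q)) =
    4.1 * (((N : ℝ) + 1) ^ l * (N + 1) * (s * decayConst l / q)) by ring]
  gcongr
  norm_num

lemma iteratedDeriv_two_sigmaT (s N : ℕ) (t : ℝ) :
    iteratedDeriv 2 (sigmaT s N) t = sigmaD s N 2 t := by
  have h0 : deriv (sigmaD s N 0) = sigmaD s N 1 := funext fun t => (hasDerivAt_sigmaD s N 0 t).deriv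
  rw [iteratedDeriv_succ, iteratedDeriv_one, ← sigmaD_zero, h0]
  exact (hasDerivAt_sigmaD s N 1 t).deriv

lemma neg_sigmaD_two_zero_ge {s N : ℕ} (hs : Even s) (hs6 : 6 ≤ s) (hN : 2 * s ≤ N) :
    0.999 / (2 * ((s : ℝ) + 1)) * ((N : ℝ) + 1) ^ 2 ≤ -sigmaD s N 2 0 := by
  have hN0 : (0 : ℝ) < N + 1 := by positivity
  have hsr : (6 : ℝ) ≤ s := by exact_mod_cast hs6
  have hg := gnorm_pos hs hs6 hN
  have hg2 := (abs_le.1 (abs_gnorm_sub_le hs hs6 hN)).2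
  have hw := splineMass_pos (s := s) (by omega)
  have h := norm_momentSum_zero_sub_le hs hs6 N (l := 2) (by norm_num)
  rw [splinePair_second_moment hs (by omega)] at h
  have h2 := ten_mul_div_le hs6 hN (decayConst_nonneg 2)
  have h3 := (abs_le.1 ((Complex.abs_re_le_norm _).trans h)).1
  have e : (((N : ℂ) + 1) ^ (2 + 1) * (splineMass s / (2 * (s + 1)))).re =
      ((N : ℝ) + 1) ^ 3 * (splineMass s / (2 * (s + 1))) := by
    rw [← Complex.ofReal_re (((N : ℝ) + 1) ^ 3 * (splineMass s / (2 * (s + 1))))]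
    push_cast
    rfl
  rw [Complex.sub_re, e] at h3
  have e2 : -sigmaD s N 2 0 = (momentSum s N 2 0).re / gnorm s N := by
    rw [sigmaD, Complex.I_sq, show (1 / (gnorm s N : ℂ)) * (-1 * momentSum s N 2 0) =
      ((-(1 / gnorm s N) : ℝ) : ℂ) * momentSum s N 2 0 by push_cast; ring, Complex.re_ofReal_mul]
    ring
  rw [e2, le_div_iff₀ hg]
  have h4 : ((N : ℝ) + 1) ^ (2 + 1) * (5 * (2 * s * decayConst 2 / (2 * π * ((N : ℝ) + 1)) ^ s)) ≤
      ((N : ℝ) + 1) ^ 3 * (splineMass s / (2 * (s + 1)) * 0.0007) := by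
    refine mul_le_mul_of_nonneg_left (h2.trans ?_) (by positivity)
    simp only [decayConst]
    rw [div_mul_eq_mul_div, div_le_div_iff₀ (by positivity) (by positivity)]
    nlinarith
  have h5 : 0.999 / (2 * ((s : ℝ) + 1)) * ((N : ℝ) + 1) ^ 2 * gnorm s N ≤
      0.999 / (2 * ((s : ℝ) + 1)) * ((N : ℝ) + 1) ^ 2 * (1.0001 * ((N + 1) * splineMass s)) := by
    gcongr
    linarith
  have h6 : 0.999 / (2 * ((s : ℝ) + 1)) * ((N : ℝ) + 1) ^ 2 * (1.0001 * ((N + 1) * splineMass s)) =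
      0.999 * 1.0001 * (((N : ℝ) + 1) ^ 3 * (splineMass s / (2 * (s + 1)))) := by
    field_simp
  have h7 : 0 ≤ ((N : ℝ) + 1) ^ 3 * (splineMass s / (2 * (s + 1))) := by positivity
  rw [h6] at h5
  linarith

/-- The trigonometric kernel as a polynomial in `cos t`. -/
noncomputable def sigmaPoly (s N : ℕ) : Polynomial ℝ :=
  ∑ k ∈ Finset.Icc (-(N : ℤ)) (N : ℤ),
    Polynomial.C (gtilde s ((k : ℝ) / (2 * ((N : ℝ) + 1))) / gnorm s N) *
      Polynomial.Chebyshev.T ℝ k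

lemma sigmaPoly_eval_cos (s N : ℕ) (t : ℝ) : (sigmaPoly s N).eval (Real.cos t) = sigmaT s N t := by
  rw [sigmaPoly, Polynomial.eval_finsetSum, sigmaT, Finset.mul_sum, Complex.re_sum]
  refine Finset.sum_congr rfl fun k _ => ?_
  rw [Polynomial.eval_mul, Polynomial.eval_C, Polynomial.Chebyshev.T_real_cos,
    show (1 / (gnorm s N : ℂ)) * ((gtilde s ((k : ℝ) / (2 * ((N : ℝ) + 1))) : ℂ) *
      Complex.exp ((k : ℂ) * t * Complex.I)) =
      ((gtilde s ((k : ℝ) / (2 * ((N : ℝ) + 1))) / gnorm s N : ℝ) : ℂ) *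
        Complex.exp (((k * t : ℝ) : ℂ) * Complex.I) by push_cast; ring, Complex.re_ofReal_mul,
    Complex.exp_ofReal_mul_I_re]

lemma sigmaD_one_eq (s N : ℕ) (t : ℝ) :
    sigmaD s N 1 t = -(Real.sin t * (sigmaPoly s N).derivative.eval (Real.cos t)) := by
  have h1 := hasDerivAt_sigmaD s N 0 t
  have h2 := ((sigmaPoly s N).hasDerivAt (Real.cos t)).comp t (Real.hasDerivAt_cos t)
  have e : (fun x => (sigmaPoly s N).eval x) ∘ Real.cos = sigmaD s N 0 := by
    funext u
    rw [sigmaD_zero, Function.comp_apply, sigmaPoly_eval_cos]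
  rw [e] at h2
  rw [h1.unique h2]
  ring

lemma sigmaD_two_eq (s N : ℕ) (t : ℝ) :
    sigmaD s N 2 t = Real.sin t ^ 2 * (sigmaPoly s N).derivative.derivative.eval (Real.cos t) -
      Real.cos t * (sigmaPoly s N).derivative.eval (Real.cos t) := by
  have h1 := hasDerivAt_sigmaD s N 1 t
  have h2 := ((Real.hasDerivAt_sin t).mul
    (((sigmaPoly s N).derivative.hasDerivAt (Real.cos t)).comp t (Real.hasDerivAt_cos t))).neg
  rw [show sigmaD s N 1 = _ from funext (sigmaD_one_eq s N)] at h1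
  rw [h1.unique h2]
  simp only [Function.comp_apply]
  ring

lemma sigmaT_zero {s N : ℕ} (hg : gnorm s N ≠ 0) : sigmaT s N 0 = 1 := by
  have h : sigmaD s N 0 0 = ((1 / (gnorm s N : ℂ)) * (gnorm s N : ℂ)).re := by
    rw [sigmaD, momentSum_zero_zero, pow_zero, one_mul]
  rw [← sigmaD_zero, h, one_div_mul_cancel (by exact_mod_cast hg), Complex.one_re]

end

/-- The rotation matrix of a quaternion. -/
def quatMat (q : Fin 4 → ℝ) : Mat3 :=
  !![q 0 ^ 2 + q 1 ^ 2 - q 2 ^ 2 - q 3 ^ 2, 2 * (q 1 * q 2 - q 0 * q 3),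
      2 * (q 1 * q 3 + q 0 * q 2);
    2 * (q 1 * q 2 + q 0 * q 3), q 0 ^ 2 - q 1 ^ 2 + q 2 ^ 2 - q 3 ^ 2,
      2 * (q 2 * q 3 - q 0 * q 1);
    2 * (q 1 * q 3 - q 0 * q 2), 2 * (q 2 * q 3 + q 0 * q 1),
      q 0 ^ 2 - q 1 ^ 2 - q 2 ^ 2 + q 3 ^ 2]

/-- A positive trace matrix all of whose relevant minors vanish is of rank one. -/
lemma exists_eq_mul_of_minors {n : ℕ} (Q : Fin n → Fin n → ℝ)
    (hQ : ∀ p i j, Q p p * Q i j = Q i p * Q j p) (htr : 0 < ∑ i, Q i i) :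
    ∃ q : Fin n → ℝ, ∀ i j, q i * q j = Q i j := by
  obtain ⟨p, -, hp⟩ := Finset.exists_lt_of_sum_lt (s := Finset.univ) (f := fun _ : Fin n => (0 : ℝ))
    (g := fun i => Q i i) (by simpa using htr)
  refine ⟨fun i => Q i p / √(Q p p), fun i j => ?_⟩
  rw [div_mul_div_comm, Real.mul_self_sqrt hp.le, ← hQ, mul_div_cancel_left₀ _ hp.ne']

lemma IsSO3.adjugate_eq {z : Mat3} (hz : IsSO3 z) : z.adjugate = z.transpose := by
  have h1 : z * z.transpose = 1 := mul_eq_one_comm.1 hz.1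
  have h2 : z.adjugate * z = 1 := by rw [Matrix.adjugate_mul, hz.2, one_smul]
  calc z.adjugate = z.adjugate * (z * z.transpose) := by rw [h1, mul_one]
    _ = z.transpose := by rw [← mul_assoc, h2, one_mul]

set_option maxHeartbeats 4000000 in
/-- Every rotation comes from a unit quaternion with nonnegative real part. -/
lemma IsSO3.exists_quat {z : Mat3} (hz : IsSO3 z) :
    ∃ q : Fin 4 → ℝ, 0 ≤ q 0 ∧ q 0 ^ 2 + q 1 ^ 2 + q 2 ^ 2 + q 3 ^ 2 = 1 ∧ z = quatMat q := by
  have hcol := hz.1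
  have hrow : z * z.transpose = 1 := mul_eq_one_comm.1 hz.1
  have hadj := hz.adjugate_eq
  rw [Matrix.adjugate_fin_three] at hadj
  simp only [← Matrix.ext_iff, Fin.forall_fin_succ, Matrix.mul_apply, Fin.sum_univ_three,
    Matrix.transpose_apply, Matrix.one_apply] at hcol hrow hadj
  simp at hcol hrow hadj
  obtain ⟨⟨c00, c01, c02⟩, ⟨c10, c11, c12⟩, c20, c21, c22⟩ := hcol
  obtain ⟨⟨r00, r01, r02⟩, ⟨r10, r11, r12⟩, r20, r21, r22⟩ := hrow
  obtain ⟨⟨a00, a01, a02⟩, ⟨a10, a11, a12⟩, a20, a21, a22⟩ := hadj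
  obtain ⟨q, hq⟩ := exists_eq_mul_of_minors (n := 4)
    (fun i j => (!![1 + z 0 0 + z 1 1 + z 2 2, z 2 1 - z 1 2, z 0 2 - z 2 0, z 1 0 - z 0 1;
      z 2 1 - z 1 2, 1 + z 0 0 - z 1 1 - z 2 2, z 0 1 + z 1 0, z 0 2 + z 2 0;
      z 0 2 - z 2 0, z 0 1 + z 1 0, 1 - z 0 0 + z 1 1 - z 2 2, z 1 2 + z 2 1;
      z 1 0 - z 0 1, z 0 2 + z 2 0, z 1 2 + z 2 1, 1 - z 0 0 - z 1 1 + z 2 2] :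
      Matrix (Fin 4) (Fin 4) ℝ) i j / 4)
    (by
      intro p i j
      fin_cases p <;> fin_cases i <;> fin_cases j <;> simp <;> linarith)
    (by simp [Fin.sum_univ_four]; linarith)
  simp [Fin.forall_fin_succ] at hq
  obtain ⟨⟨q00, q01, q02, q03⟩, ⟨q10, q11, q12, q13⟩, ⟨q20, q21, q22, q23⟩, q30, q31, q32, q33⟩ := hq
  have hnorm : q 0 ^ 2 + q 1 ^ 2 + q 2 ^ 2 + q 3 ^ 2 = 1 := by linarith
  have hzq : z = quatMat q := by
    ext i j
    fin_cases i <;> fin_cases j <;> simp [quatMat] <;> linarith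
  rcases le_total 0 (q 0) with h | h
  · exact ⟨q, h, hnorm, hzq⟩
  · refine ⟨-q, by simpa using h, by simpa using hnorm, hzq.trans ?_⟩
    simp [quatMat]

lemma hasDerivAt_trace_mul_exp (A L : Mat3) :
    HasDerivAt (fun t : ℝ => (A * NormedSpace.exp (t • L)).trace) (A * L).trace 0 := by
  let : NormedRing Mat3 := Matrix.linftyOpNormedRing
  let : NormedAlgebra ℝ Mat3 := Matrix.linftyOpNormedAlgebra
  have h := hasDerivAt_exp_smul_const (𝕂 := ℝ) L (0 : ℝ)
  rw [zero_smul, NormedSpace.exp_zero, one_mul] at h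
  let φ : Mat3 →L[ℝ] ℝ := LinearMap.toContinuousLinearMap
    ((Matrix.traceLinearMap (Fin 3) ℝ ℝ).comp (LinearMap.mulLeft ℝ A))
  exact (φ.hasFDerivAt.comp_hasDerivAt (0 : ℝ) h :)

lemma hasDerivAt_trace_exp_neg_mul (A L : Mat3) :
    HasDerivAt (fun t : ℝ => (NormedSpace.exp (-(t • L)) * A).trace) (-(A * L).trace) 0 := by
  have h := hasDerivAt_trace_mul_exp A (-L)
  simp only [smul_neg, mul_neg, Matrix.trace_neg] at h
  convert! h using 2
  exact Matrix.trace_mul_comm _ _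

lemma Lgen_transpose (i : Fin 3) : (Lgen i).transpose = -Lgen i := by
  fin_cases i <;> ext a b <;> fin_cases a <;> fin_cases b <;> simp [Lgen]

lemma IsSO3.inv_eq {x : Mat3} (hx : IsSO3 x) : x⁻¹ = x.transpose :=
  Matrix.inv_eq_left_inv hx.1

lemma IsSO3.inv {x : Mat3} (hx : IsSO3 x) : IsSO3 x⁻¹ := by
  rw [hx.inv_eq]
  refine ⟨?_, by rw [Matrix.det_transpose, hx.2]⟩
  rw [Matrix.transpose_transpose]
  exact mul_eq_one_comm.1 hx.1

lemma IsSO3.mul {x y : Mat3} (hx : IsSO3 x) (hy : IsSO3 y) : IsSO3 (x * y) := by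
  refine ⟨?_, by rw [Matrix.det_mul, hx.2, hy.2, one_mul]⟩
  rw [Matrix.transpose_mul, mul_assoc, ← mul_assoc _ x, hx.1, one_mul, hy.1]

lemma transpose_exp_mul_exp (i : Fin 3) (t : ℝ) :
    (NormedSpace.exp (t • Lgen i)).transpose * NormedSpace.exp (t • Lgen i) = 1 := by
  rw [← Matrix.exp_transpose, Matrix.transpose_smul, Lgen_transpose, smul_neg, Matrix.exp_neg]
  exact Matrix.nonsing_inv_mul _ ((Matrix.isUnit_iff_isUnit_det _).1 (Matrix.isUnit_exp _))

lemma isSO3_exp (i : Fin 3) (t : ℝ) : IsSO3 (NormedSpace.exp (t • Lgen i)) := by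
  refine ⟨transpose_exp_mul_exp i t, ?_⟩
  have h : NormedSpace.exp (t • Lgen i) =
      NormedSpace.exp ((t / 2) • Lgen i) * NormedSpace.exp ((t / 2) • Lgen i) := by
    rw [← Matrix.exp_add_of_commute _ _ (Commute.refl _), ← add_smul, add_halves]
  have h2 := congrArg Matrix.det (transpose_exp_mul_exp i (t / 2))
  rw [Matrix.det_mul, Matrix.det_transpose, Matrix.det_one] at h2
  rw [h, Matrix.det_mul, h2]

lemma trace_quatMat {q : Fin 4 → ℝ} (hq : q 0 ^ 2 + q 1 ^ 2 + q 2 ^ 2 + q 3 ^ 2 = 1) :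
    ((quatMat q).trace - 1) / 2 = 2 * q 0 ^ 2 - 1 := by
  simp [quatMat, Matrix.trace_fin_three]
  linarith

lemma IsSO3.cos_rotAngle {z : Mat3} (hz : IsSO3 z) :
    Real.cos (rotAngle z) = (z.trace - 1) / 2 := by
  obtain ⟨q, -, hq, rfl⟩ := hz.exists_quat
  rw [rotAngle, trace_quatMat hq, Real.cos_arccos] <;>
    nlinarith [sq_nonneg (q 0), sq_nonneg (q 1), sq_nonneg (q 2), sq_nonneg (q 3)]

lemma IsSO3.sigmaT_rotAngle {z : Mat3} (hz : IsSO3 z) (s N : ℕ) :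
    sigmaT s N (rotAngle z) = (sigmaPoly s N).eval ((z.trace - 1) / 2) := by
  rw [← hz.cos_rotAngle, sigmaPoly_eval_cos]

lemma Xx_sigmaK {x y : Mat3} (hx : IsSO3 x) (hy : IsSO3 y) (s N : ℕ) (i : Fin 3) :
    Xx i (sigmaK s N) x y =
      (sigmaPoly s N).derivative.eval (((y⁻¹ * x).trace - 1) / 2) *
        ((y⁻¹ * x * Lgen i).trace / 2) := by
  have e : (fun t : ℝ => sigmaK s N (x * NormedSpace.exp (t • Lgen i)) y) =
      (fun u => (sigmaPoly s N).eval u) ∘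
        (fun t : ℝ => ((y⁻¹ * x * NormedSpace.exp (t • Lgen i)).trace - 1) / 2) := by
    funext t
    rw [sigmaK, ← mul_assoc, ((hy.inv.mul hx).mul (isSO3_exp i t)).sigmaT_rotAngle]
    rfl
  have h := ((hasDerivAt_trace_mul_exp (y⁻¹ * x) (Lgen i)).sub_const 1).div_const 2
  rw [Xx, e]
  refine (((sigmaPoly s N).hasDerivAt _).comp (0 : ℝ) h).deriv.trans ?_
  simp

lemma Xy_sigmaK {x y : Mat3} (hx : IsSO3 x) (hy : IsSO3 y) (s N : ℕ) (j : Fin 3) :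
    Xy j (sigmaK s N) x y =
      -((sigmaPoly s N).derivative.eval (((y⁻¹ * x).trace - 1) / 2) *
        ((Lgen j * (y⁻¹ * x)).trace / 2)) := by
  have e : (fun t : ℝ => sigmaK s N x (y * NormedSpace.exp (t • Lgen j))) =
      (fun u => (sigmaPoly s N).eval u) ∘
        (fun t : ℝ => ((NormedSpace.exp (-(t • Lgen j)) * (y⁻¹ * x)).trace - 1) / 2) := by
    funext t
    have e1 : (y * NormedSpace.exp (t • Lgen j))⁻¹ * x =
        NormedSpace.exp (-(t • Lgen j)) * (y⁻¹ * x) := by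
      rw [Matrix.mul_inv_rev, Matrix.exp_neg, mul_assoc]
    have h1 := ((hy.mul (isSO3_exp j t)).inv.mul hx).sigmaT_rotAngle s N
    rw [sigmaK, h1, e1]
    rfl
  have h := ((hasDerivAt_trace_exp_neg_mul (y⁻¹ * x) (Lgen j)).sub_const 1).div_const 2
  rw [Xy, e]
  refine (((sigmaPoly s N).hasDerivAt _).comp (0 : ℝ) h).deriv.trans ?_
  rw [Matrix.trace_mul_comm (Lgen j)]
  simp
  ring

lemma Xx_Xy_sigmaK {x y : Mat3} (hx : IsSO3 x) (hy : IsSO3 y) (s N : ℕ) (i j : Fin 3) :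
    Xx i (Xy j (sigmaK s N)) x y =
      -((sigmaPoly s N).derivative.derivative.eval (((y⁻¹ * x).trace - 1) / 2) *
          ((y⁻¹ * x * Lgen i).trace / 2) * ((Lgen j * (y⁻¹ * x)).trace / 2) +
        (sigmaPoly s N).derivative.eval (((y⁻¹ * x).trace - 1) / 2) *
          ((Lgen j * (y⁻¹ * x) * Lgen i).trace / 2)) := by
  have e : (fun t : ℝ => Xy j (sigmaK s N) (x * NormedSpace.exp (t • Lgen i)) y) =
      fun t : ℝ => -(((fun u => (sigmaPoly s N).derivative.eval u) ∘
        (fun t : ℝ => ((y⁻¹ * x * NormedSpace.exp (t • Lgen i)).trace - 1) / 2)) t *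
        ((Lgen j * (y⁻¹ * x) * NormedSpace.exp (t • Lgen i)).trace / 2)) := by
    funext t
    rw [Xy_sigmaK (hx.mul (isSO3_exp i t)) hy]
    simp only [mul_assoc, Function.comp_apply]
  have h := ((hasDerivAt_trace_mul_exp (y⁻¹ * x) (Lgen i)).sub_const 1).div_const 2
  have h2 := (hasDerivAt_trace_mul_exp (Lgen j * (y⁻¹ * x)) (Lgen i)).div_const 2
  rw [Xx, e]
  refine ((((sigmaPoly s N).derivative.hasDerivAt _).comp (0 : ℝ) h).mul h2).neg.deriv.trans ?_
  simp

lemma rotAngle_nonneg (z : Mat3) : 0 ≤ rotAngle z := Real.arccos_nonneg _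

lemma rotAngle_le_pi (z : Mat3) : rotAngle z ≤ π := Real.arccos_le_pi _

/-- A rotation by the angle `ω` has a quaternion with real part `cos (ω/2)`. -/
lemma IsSO3.exists_quat_angle {z : Mat3} (hz : IsSO3 z) :
    ∃ q : Fin 4 → ℝ, q 0 = Real.cos (rotAngle z / 2) ∧
      q 1 ^ 2 + q 2 ^ 2 + q 3 ^ 2 = Real.sin (rotAngle z / 2) ^ 2 ∧ z = quatMat q := by
  obtain ⟨q, h0, hq, hzq⟩ := hz.exists_quat
  have hc := hz.cos_rotAngle
  rw [hzq, trace_quatMat hq, ← hzq] at hc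
  have hc2 := Real.cos_sq (rotAngle z / 2)
  rw [show 2 * (rotAngle z / 2) = rotAngle z by ring] at hc2
  have hcos : 0 ≤ Real.cos (rotAngle z / 2) := Real.cos_nonneg_of_mem_Icc
    ⟨by linarith [rotAngle_nonneg z, Real.pi_pos], by linarith [rotAngle_le_pi z]⟩
  have e : q 0 = Real.cos (rotAngle z / 2) := by
    rw [← sq_eq_sq₀ h0 hcos]; linarith
  refine ⟨q, e, ?_, hzq⟩
  rw [Real.sin_sq, ← e]
  linarith

lemma trace_quatMat_mul_Lgen (q : Fin 4 → ℝ) (i : Fin 3) :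
    (quatMat q * Lgen i).trace = -4 * (q 0 * q i.succ) := by
  fin_cases i <;> simp [quatMat, Lgen, Matrix.trace_fin_three] <;> ring

lemma trace_Lgen_mul_quatMat (q : Fin 4 → ℝ) (j : Fin 3) :
    (Lgen j * quatMat q).trace = -4 * (q 0 * q j.succ) := by
  rw [Matrix.trace_mul_comm, trace_quatMat_mul_Lgen]

lemma trace_Lgen_mul_quatMat_mul_Lgen_self (q : Fin 4 → ℝ) (i : Fin 3) :
    (Lgen i * quatMat q * Lgen i).trace = 2 * (q i.succ ^ 2 - q 0 ^ 2) := by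
  fin_cases i <;> simp [quatMat, Lgen, Matrix.trace_fin_three] <;> ring

lemma trace_Lgen_mul_quatMat_mul_Lgen (q : Fin 4 → ℝ) {i j : Fin 3} (hij : i ≠ j) :
    ∃ κ : ℝ, κ ^ 2 ≤ q 1 ^ 2 + q 2 ^ 2 + q 3 ^ 2 ∧
      (Lgen j * quatMat q * Lgen i).trace = 2 * (q i.succ * q j.succ + q 0 * κ) := by
  have h1 := sq_nonneg (q 1)
  have h2 := sq_nonneg (q 2)
  have h3 := sq_nonneg (q 3)
  fin_cases i <;> fin_cases j <;> first | exact absurd rfl hij | skip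
  · exact ⟨-q 3, by linarith, by
      simp [quatMat, Lgen, Matrix.trace_fin_three]
      ring⟩
  · exact ⟨q 2, by linarith, by
      simp [quatMat, Lgen, Matrix.trace_fin_three]⟩
  · exact ⟨q 3, by linarith, by
      simp [quatMat, Lgen, Matrix.trace_fin_three]
      ring⟩
  · exact ⟨-q 1, by linarith, by
      simp [quatMat, Lgen, Matrix.trace_fin_three]
      ring⟩
  · exact ⟨-q 2, by linarith, by
      simp [quatMat, Lgen, Matrix.trace_fin_three]
      ring⟩
  · exact ⟨q 1, by linarith, by
      simp [quatMat, Lgen, Matrix.trace_fin_three]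
      ring⟩

lemma sq_le_sum_succ (q : Fin 4 → ℝ) (i : Fin 3) :
    q i.succ ^ 2 ≤ q 1 ^ 2 + q 2 ^ 2 + q 3 ^ 2 := by
  have h1 := sq_nonneg (q 1)
  have h2 := sq_nonneg (q 2)
  have h3 := sq_nonneg (q 3)
  fin_cases i
  · change q 1 ^ 2 ≤ _; linarith
  · change q 2 ^ 2 ≤ _; linarith
  · change q 3 ^ 2 ≤ _; linarith

/-- Chain rule estimate for first derivatives in terms of half angles. -/
lemma abs_derivative_mul_le (s N : ℕ) {ω v : ℝ} (h0 : 0 ≤ ω) (hπ : ω ≤ π)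
    (hv : v ^ 2 ≤ Real.sin (ω / 2) ^ 2) :
    |(sigmaPoly s N).derivative.eval (Real.cos ω)| * (Real.cos (ω / 2) * |v|) ≤
      |sigmaD s N 1 ω| / 2 := by
  have hc : 0 ≤ Real.cos (ω / 2) := Real.cos_nonneg_of_mem_Icc
    ⟨by linarith [Real.pi_pos], by linarith⟩
  have hs : 0 ≤ Real.sin (ω / 2) := Real.sin_nonneg_of_nonneg_of_le_pi (by linarith) (by linarith)
  have e : Real.sin ω = 2 * Real.sin (ω / 2) * Real.cos (ω / 2) := by
    rw [← Real.sin_two_mul]; congr 1; ring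
  rw [sigmaD_one_eq, abs_neg, abs_mul, e,
    abs_of_nonneg (by positivity : 0 ≤ 2 * Real.sin (ω / 2) * Real.cos (ω / 2))]
  have hv' : |v| ≤ Real.sin (ω / 2) := abs_le_of_sq_le_sq hv hs
  have := mul_le_mul_of_nonneg_left hv'
    (mul_nonneg (abs_nonneg ((sigmaPoly s N).derivative.eval (Real.cos ω))) hc)
  linarith

lemma abs_second_derivative_le (s N : ℕ) {ω u v δ κ : ℝ} (h0 : 0 < ω) (hπ : ω ≤ π)
    (huv : |u * v| ≤ Real.sin (ω / 2) ^ 2)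
    (hδ : |δ * Real.sin (ω / 2) ^ 2 - u * v| ≤ Real.sin (ω / 2) ^ 2)
    (hκ : κ ^ 2 ≤ Real.sin (ω / 2) ^ 2) :
    |-4 * (sigmaPoly s N).derivative.derivative.eval (Real.cos ω) * Real.cos (ω / 2) ^ 2 * (u * v)
      + (sigmaPoly s N).derivative.eval (Real.cos ω) *
        (δ * Real.cos (ω / 2) ^ 2 - u * v - Real.cos (ω / 2) * κ)| ≤
      |sigmaD s N 2 ω| + |sigmaD s N 1 ω| * (1 / ω + 1 / 2) := by
  have hκ' := abs_derivative_mul_le s N h0.le hπ hκ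
  have hS' := abs_derivative_mul_le s N h0.le hπ (le_refl (Real.sin (ω / 2) ^ 2))
  have h2 := sigmaD_two_eq s N ω
  have hc : 0 ≤ Real.cos (ω / 2) := Real.cos_nonneg_of_mem_Icc
    ⟨by linarith [Real.pi_pos], by linarith⟩
  have hs : 0 < Real.sin (ω / 2) := Real.sin_pos_of_pos_of_lt_pi (by linarith)
    (by linarith [Real.pi_pos])
  have hcot : Real.cos (ω / 2) * ω ≤ 2 * Real.sin (ω / 2) := by
    rcases hπ.lt_or_eq with h | h
    · have := Real.lt_tan (x := ω / 2) (by linarith) (by linarith)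
      have hc' : 0 < Real.cos (ω / 2) := Real.cos_pos_of_mem_Ioo
        ⟨by linarith [Real.pi_pos], by linarith⟩
      rw [Real.tan_eq_sin_div_cos, lt_div_iff₀ hc'] at this
      linarith
    · rw [h, Real.cos_pi_div_two, Real.sin_pi_div_two]; norm_num
  have es : Real.sin ω = 2 * Real.sin (ω / 2) * Real.cos (ω / 2) := by
    rw [← Real.sin_two_mul]; congr 1; ring
  have ec : Real.cos ω = Real.cos (ω / 2) ^ 2 - Real.sin (ω / 2) ^ 2 := by
    rw [← Real.cos_two_mul']; congr 1; ring
  rw [abs_of_pos hs] at hS'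
  set S := Real.sin (ω / 2)
  set c := Real.cos (ω / 2)
  set P1 := (sigmaPoly s N).derivative.eval (Real.cos ω)
  set P2 := (sigmaPoly s N).derivative.derivative.eval (Real.cos ω)
  set d1 := sigmaD s N 1 ω
  set d2 := sigmaD s N 2 ω
  rw [es, ec] at h2
  obtain ⟨m, hm⟩ : ∃ m, u * v = m * S ^ 2 := ⟨u * v / S ^ 2, by field_simp⟩
  have hS2 : 0 < S ^ 2 := by positivity
  rw [hm] at huv hδ
  have hm1 : |m| ≤ 1 := by
    rw [abs_mul, abs_of_pos hS2] at huv
    exact le_of_mul_le_mul_right (by linarith) hS2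
  have hm2 : |δ - m| ≤ 1 := by
    rw [← sub_mul, abs_mul, abs_of_pos hS2] at hδ
    exact le_of_mul_le_mul_right (by linarith) hS2
  have key : -4 * P2 * c ^ 2 * (u * v) + P1 * (δ * c ^ 2 - u * v - c * κ) =
      -(m * d2) + P1 * (c ^ 2 * (δ - m)) - P1 * (c * κ) := by
    rw [hm]
    linear_combination m * h2
  rw [key]
  have hP : |P1| * c ^ 2 ≤ |d1| * (1 / ω) := by
    have h3 : |P1| * c ^ 2 * ω ≤ |d1| := by
      calc |P1| * c ^ 2 * ω = |P1| * c * (c * ω) := by ring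
        _ ≤ |P1| * c * (2 * S) := by gcongr
        _ ≤ |d1| := by linarith
    rwa [mul_one_div, le_div_iff₀ h0]
  calc _ ≤ |-(m * d2)| + |P1 * (c ^ 2 * (δ - m))| + |P1 * (c * κ)| :=
        (abs_sub _ _).trans (add_le_add_left (abs_add_le _ _) _)
    _ = |m| * |d2| + |P1| * c ^ 2 * |δ - m| + |P1| * (c * |κ|) := by
        rw [abs_neg, abs_mul, abs_mul P1, abs_mul P1, abs_mul (c ^ 2), abs_mul c,
          abs_of_nonneg hc, abs_of_nonneg (sq_nonneg c)]
        ring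
    _ ≤ 1 * |d2| + |P1| * c ^ 2 * 1 + |d1| / 2 := by gcongr
    _ ≤ _ := by linarith

lemma abs_Xx_sigmaK_le {x y : Mat3} (hx : IsSO3 x) (hy : IsSO3 y) (s N : ℕ) (i : Fin 3) :
    |Xx i (sigmaK s N) x y| ≤ |sigmaD s N 1 (rotAngle (y⁻¹ * x))| := by
  have hz := hy.inv.mul hx
  rw [Xx_sigmaK hx hy, ← hz.cos_rotAngle]
  obtain ⟨q, h0, hq, hzq⟩ := hz.exists_quat_angle
  have h := abs_derivative_mul_le s N (rotAngle_nonneg _) (rotAngle_le_pi _)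
    ((sq_le_sum_succ q i).trans_eq hq)
  rw [← h0] at h
  have hn : 0 ≤ q 0 := h0 ▸ Real.cos_nonneg_of_mem_Icc
    ⟨by linarith [rotAngle_nonneg (y⁻¹ * x), Real.pi_pos], by linarith [rotAngle_le_pi (y⁻¹ * x)]⟩
  have e : (y⁻¹ * x * Lgen i).trace = -4 * (q 0 * q i.succ) := by
    rw [hzq, trace_quatMat_mul_Lgen]
  rw [e, abs_mul, show -4 * (q 0 * q i.succ) / 2 = -(2 * q 0 * q i.succ) by ring, abs_neg,
    abs_mul (2 * q 0), abs_of_nonneg (by positivity : 0 ≤ 2 * q 0)]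
  linarith

lemma Xy_sigmaK_eq_neg_Xx {x y : Mat3} (hx : IsSO3 x) (hy : IsSO3 y) (s N : ℕ) (i : Fin 3) :
    Xy i (sigmaK s N) x y = -Xx i (sigmaK s N) x y := by
  rw [Xx_sigmaK hx hy, Xy_sigmaK hx hy, Matrix.trace_mul_comm (Lgen i)]

lemma abs_Xx_Xy_sigmaK_le {x y : Mat3} (hx : IsSO3 x) (hy : IsSO3 y) (s N : ℕ) (i j : Fin 3)
    (hpos : 0 < rotAngle (y⁻¹ * x)) :
    |Xx i (Xy j (sigmaK s N)) x y| ≤ |sigmaD s N 2 (rotAngle (y⁻¹ * x))| +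
      |sigmaD s N 1 (rotAngle (y⁻¹ * x))| * (1 / rotAngle (y⁻¹ * x) + 1 / 2) := by
  have hz := hy.inv.mul hx
  rw [Xx_Xy_sigmaK hx hy, ← hz.cos_rotAngle]
  obtain ⟨q, h0, hq, hzq⟩ := hz.exists_quat_angle
  have hπ := rotAngle_le_pi (y⁻¹ * x)
  have e1 : (y⁻¹ * x * Lgen i).trace = -4 * (q 0 * q i.succ) := by
    rw [hzq, trace_quatMat_mul_Lgen]
  have e2 : (Lgen j * (y⁻¹ * x)).trace = -4 * (q 0 * q j.succ) := by
    rw [hzq, trace_Lgen_mul_quatMat]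
  rw [e1, e2]
  have hi := (sq_le_sum_succ q i).trans_eq hq
  have hj := (sq_le_sum_succ q j).trans_eq hq
  have huv : |q i.succ * q j.succ| ≤ Real.sin (rotAngle (y⁻¹ * x) / 2) ^ 2 := by
    rw [abs_le]
    constructor <;> nlinarith [sq_nonneg (q i.succ - q j.succ), sq_nonneg (q i.succ + q j.succ)]
  rcases eq_or_ne i j with rfl | hij
  · have e3 : (Lgen i * (y⁻¹ * x) * Lgen i).trace = 2 * (q i.succ ^ 2 - q 0 ^ 2) := by
      rw [hzq, trace_Lgen_mul_quatMat_mul_Lgen_self]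
    have h := abs_second_derivative_le s N (δ := 1) (κ := 0) hpos hπ huv
      (by rw [abs_le]; constructor <;> nlinarith) (by simpa using sq_nonneg _)
    rw [← h0] at h
    rw [e3]
    convert h using 2
    ring
  · obtain ⟨κ, hκ, e3⟩ := trace_Lgen_mul_quatMat_mul_Lgen q hij
    rw [← hzq] at e3
    have h := abs_second_derivative_le s N (δ := 0) (κ := κ) hpos hπ huv
      (by simpa using huv) (hκ.trans_eq hq)
    rw [← h0] at h
    rw [e3]
    convert h using 2
    ring

lemma Xx_sigmaK_self {x : Mat3} (hx : IsSO3 x) (s N : ℕ) (i : Fin 3) :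
    Xx i (sigmaK s N) x x = 0 := by
  rw [Xx_sigmaK hx hx, hx.inv_eq, hx.1, one_mul]
  fin_cases i <;> simp [Lgen, Matrix.trace_fin_three]

lemma Xx_Xy_sigmaK_self {x : Mat3} (hx : IsSO3 x) (s N : ℕ) (i j : Fin 3) :
    Xx i (Xy j (sigmaK s N)) x x = if i = j then -sigmaD s N 2 0 else 0 := by
  rw [Xx_Xy_sigmaK hx hx, hx.inv_eq, hx.1, sigmaD_two_eq]
  fin_cases i <;> fin_cases j <;>
    simp [Lgen, Matrix.trace_fin_three] <;> norm_num

lemma sigmaK_self {x : Mat3} (hx : IsSO3 x) {s N : ℕ} (hg : gnorm s N ≠ 0) :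
    sigmaK s N x x = 1 := by
  rw [sigmaK, hx.inv_eq, hx.1, rotAngle, Matrix.trace_one, Fintype.card_fin]
  norm_num [sigmaT_zero hg]

lemma sin_mul_le_sin_mul {x y : ℝ} (hx : 0 ≤ x) (hxy : x ≤ y) (hy : y ≤ π) :
    Real.sin y * x ≤ Real.sin x * y := by
  rcases (hx.trans hxy).eq_or_lt with h | h
  · have : x = 0 := by linarith
    simp [this, ← h]
  have hc := strictConcaveOn_sin_Icc.concaveOn.2 (⟨le_rfl, Real.pi_pos.le⟩ : 0 ∈ Set.Icc 0 π)
    (⟨h.le, hy⟩ : y ∈ Set.Icc 0 π)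
    (sub_nonneg.2 ((div_le_one h).2 hxy) : 0 ≤ 1 - x / y)
    (by positivity : 0 ≤ x / y) (by ring)
  simp only [smul_eq_mul, mul_zero, zero_add, Real.sin_zero, div_mul_cancel₀ x h.ne'] at hc
  calc Real.sin y * x = x / y * Real.sin y * y := by field_simp
    _ ≤ _ := mul_le_mul_of_nonneg_right hc h.le

lemma convexOn_cos_sqrt : ConvexOn ℝ (Set.Icc 0 (π ^ 2)) (fun u => Real.cos √u) := by
  have hd : ∀ u : ℝ, 0 < u → HasDerivAt (fun u => Real.cos √u)
      (-Real.sin √u * (1 / (2 * √u))) u := fun u hu =>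
    (Real.hasDerivAt_cos _).comp u (Real.hasDerivAt_sqrt hu.ne')
  apply MonotoneOn.convexOn_of_deriv (convex_Icc _ _)
  · exact (Real.continuous_cos.comp Real.continuous_sqrt).continuousOn
  · rw [interior_Icc]
    exact fun u hu => (hd u hu.1).differentiableAt.differentiableWithinAt
  · rw [interior_Icc]
    intro u hu v hv huv
    rw [(hd u hu.1).deriv, (hd v hv.1).deriv]
    have hu' := Real.sqrt_pos.2 hu.1
    have hv' := Real.sqrt_pos.2 hv.1
    have h := sin_mul_le_sin_mul hu'.le (Real.sqrt_le_sqrt huv)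
      (Real.sqrt_le_iff.2 ⟨Real.pi_pos.le, hv.2.le⟩)
    rw [neg_mul, neg_mul, neg_le_neg_iff, mul_one_div, mul_one_div,
      div_le_div_iff₀ (by positivity) (by positivity)]
    linarith

/-- Euclidean triangles with sides `A`, `B` are larger than spherical ones. -/
lemma cos_sqrt_le {A B γ : ℝ} (hA : 0 ≤ A) (hA' : A ≤ π / 2) (hB : 0 ≤ B) (hB' : B ≤ π / 2)
    (hγ : |γ| ≤ 1) :
    Real.cos √(A ^ 2 + B ^ 2 - 2 * (A * B * γ)) ≤
      Real.cos A * Real.cos B + γ * (Real.sin A * Real.sin B) := by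
  obtain ⟨h1, h2⟩ := abs_le.1 hγ
  have h := convexOn_cos_sqrt.2
    (⟨sq_nonneg _, by rw [sq_le_sq]; apply abs_le_abs <;> linarith⟩ :
      (A - B) ^ 2 ∈ Set.Icc 0 (π ^ 2))
    (⟨sq_nonneg _, by rw [sq_le_sq]; apply abs_le_abs <;> linarith⟩ :
      (A + B) ^ 2 ∈ Set.Icc 0 (π ^ 2))
    (by linarith : 0 ≤ (1 + γ) / 2) (by linarith : 0 ≤ (1 - γ) / 2) (by ring)
  simp only [smul_eq_mul, Real.sqrt_sq_eq_abs, Real.cos_abs, Real.cos_add, Real.cos_sub] at h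
  calc _ = Real.cos √((1 + γ) / 2 * (A - B) ^ 2 + (1 - γ) / 2 * (A + B) ^ 2) := by
        congr 2; ring
    _ ≤ _ := h.trans_eq (by ring)

/-- The unit quaternion `exp w` of a purely imaginary quaternion `w`. -/
noncomputable def expQuat (w : EuclideanSpace ℝ (Fin 3)) : Fin 4 → ℝ :=
  Fin.cons (Real.cos ‖w‖) fun i => Real.sinc ‖w‖ * w i

lemma self_mul_sinc (y : ℝ) : y * Real.sinc y = Real.sin y := by
  rcases eq_or_ne y 0 with rfl | h
  · simp
  · rw [Real.sinc_of_ne_zero h, mul_div_cancel₀ _ h]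

lemma IsSO3.exists_expQuat {z : Mat3} (hz : IsSO3 z) :
    ∃ w : EuclideanSpace ℝ (Fin 3), ‖w‖ = rotAngle z / 2 ∧ z = quatMat (expQuat w) := by
  obtain ⟨q, h0, hq, hzq⟩ := hz.exists_quat_angle
  have hy0 : 0 ≤ rotAngle z / 2 := by linarith [rotAngle_nonneg z]
  have hyπ : rotAngle z / 2 ≤ π / 2 := by linarith [rotAngle_le_pi z]
  set y := rotAngle z / 2
  have hsinc : 0 < Real.sinc y := by
    rcases hy0.eq_or_lt with h | h
    · rw [← h, Real.sinc_zero]; exact one_pos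
    · rw [Real.sinc_of_ne_zero h.ne']
      exact div_pos (Real.sin_pos_of_pos_of_lt_pi h (by linarith [Real.pi_pos])) h
  let w : EuclideanSpace ℝ (Fin 3) := WithLp.toLp 2 fun i => q i.succ / Real.sinc y
  have hw : ‖w‖ = y := by
    rw [EuclideanSpace.norm_eq, Real.sqrt_eq_iff_mul_self_eq (by positivity) hy0]
    simp only [w, Fin.sum_univ_three, Real.norm_eq_abs, sq_abs, div_pow]
    rw [← add_div, ← add_div, div_eq_iff (by positivity)]
    change q 1 ^ 2 + q 2 ^ 2 + q 3 ^ 2 = _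
    rw [hq, ← self_mul_sinc]
    ring
  refine ⟨w, hw, hzq.trans ?_⟩
  congr 1
  ext i
  refine Fin.cases ?_ (fun i => ?_) i
  · simp [expQuat, hw, h0]
  · simp only [expQuat, hw, Fin.cons_succ, w]
    field_simp

lemma trace_quatMat_mul_transpose (p q : Fin 4 → ℝ) :
    (quatMat p * (quatMat q).transpose).trace = 4 * (∑ i, p i * q i) ^ 2 -
      (∑ i, p i ^ 2) * ∑ i, q i ^ 2 := by
  simp only [quatMat, Matrix.trace_fin_three, Matrix.mul_apply, Fin.sum_univ_three,
    Fin.sum_univ_four, Matrix.transpose_apply, Matrix.of_apply, Matrix.cons_val]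
  ring

lemma sum_expQuat_mul (w w' : EuclideanSpace ℝ (Fin 3)) :
    ∑ i, expQuat w i * expQuat w' i =
      Real.cos ‖w‖ * Real.cos ‖w'‖ + Real.sinc ‖w‖ * Real.sinc ‖w'‖ * inner ℝ w w' := by
  rw [Fin.sum_univ_succ, PiLp.inner_apply, Finset.mul_sum]
  simp only [expQuat, Fin.cons_zero, Fin.cons_succ, RCLike.inner_apply, conj_trivial]
  congr 1
  exact Finset.sum_congr rfl fun i _ => by ring

lemma sum_expQuat_sq (w : EuclideanSpace ℝ (Fin 3)) : ∑ i, expQuat w i ^ 2 = 1 := by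
  simp only [sq, sum_expQuat_mul, real_inner_self_eq_norm_sq]
  rw [← Real.cos_sq_add_sin_sq ‖w‖, ← self_mul_sinc]
  ring

lemma cos_norm_sub_le {w w' : EuclideanSpace ℝ (Fin 3)} (hw : ‖w‖ ≤ π / 2) (hw' : ‖w'‖ ≤ π / 2) :
    Real.cos ‖w - w'‖ ≤ ∑ i, expQuat w i * expQuat w' i := by
  obtain ⟨γ, hγ, e⟩ : ∃ γ : ℝ, |γ| ≤ 1 ∧ inner ℝ w w' = ‖w‖ * ‖w'‖ * γ := by
    rcases eq_or_ne (‖w‖ * ‖w'‖) 0 with h | h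
    · refine ⟨0, by simp, ?_⟩
      have := abs_real_inner_le_norm w w'
      rw [h] at this
      rw [mul_zero]
      exact abs_nonpos_iff.1 this
    · exact ⟨_, abs_real_inner_div_norm_mul_norm_le_one w w', (mul_div_cancel₀ _ h).symm⟩
  have h := cos_sqrt_le (norm_nonneg w) hw (norm_nonneg w') hw' hγ
  have e2 : ‖w - w'‖ = √(‖w‖ ^ 2 + ‖w'‖ ^ 2 - 2 * (‖w‖ * ‖w'‖ * γ)) := by
    rw [← Real.sqrt_sq (norm_nonneg (w - w')), norm_sub_sq_real, e]
    congr 1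
    ring
  rw [e2, sum_expQuat_mul, e]
  refine h.trans_eq ?_
  rw [← self_mul_sinc, ← self_mul_sinc]
  ring

lemma rotAngle_div_two_le_norm_sub {w w' : EuclideanSpace ℝ (Fin 3)} (hw : ‖w‖ ≤ π / 2)
    (hw' : ‖w'‖ ≤ π / 2) {z : Mat3} (hz : IsSO3 z)
    (hzw : z = quatMat (expQuat w) * (quatMat (expQuat w')).transpose) :
    rotAngle z / 2 ≤ ‖w - w'‖ := by
  by_contra! hlt
  have h0 := norm_nonneg (w - w')
  have hπ := rotAngle_le_pi z
  have hcos := Real.cos_lt_cos_of_nonneg_of_le_pi_div_two h0 (by linarith) hlt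
  have hle := cos_norm_sub_le hw hw'
  have hc := hz.cos_rotAngle
  rw [hzw, trace_quatMat_mul_transpose, sum_expQuat_sq, sum_expQuat_sq, ← hzw] at hc
  have hc2 := Real.cos_sq (rotAngle z / 2)
  rw [show 2 * (rotAngle z / 2) = rotAngle z by ring, hc] at hc2
  have hn : 0 ≤ Real.cos (rotAngle z / 2) := Real.cos_nonneg_of_mem_Icc
    ⟨by linarith [Real.pi_pos], by linarith⟩
  nlinarith

/-- Volume bound for separated points of a ball in three dimensional space. -/
lemma card_le_of_separated_ball {ι : Type*} (T : Finset ι) (w : ι → EuclideanSpace ℝ (Fin 3))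
    {ε R : ℝ} (hε : 0 < ε) (hR : 0 ≤ R) (hw : ∀ b ∈ T, ‖w b‖ ≤ R)
    (hsep : ∀ b ∈ T, ∀ c ∈ T, b ≠ c → ε ≤ ‖w b - w c‖) :
    (T.card : ℝ) ≤ (2 * R / ε + 1) ^ 3 := by
  let μ : MeasureTheory.Measure (EuclideanSpace ℝ (Fin 3)) := MeasureTheory.volume
  have hδ : 0 < ε / 2 := by positivity
  have hρ : 0 < R + ε / 2 := by positivity
  have hd : Set.Pairwise (T : Set ι)
      (Function.onFun Disjoint fun b => Metric.ball (w b) (ε / 2)) := by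
    intro b hb c hc hbc
    apply Metric.ball_disjoint_ball
    rw [dist_eq_norm]
    linarith [hsep b hb c hc hbc]
  have hsub : (⋃ b ∈ T, Metric.ball (w b) (ε / 2)) ⊆ Metric.ball 0 (R + ε / 2) := by
    refine Set.iUnion₂_subset fun b hb => Metric.ball_subset_ball' ?_
    rw [dist_zero_right]
    linarith [hw b hb]
  have hle := MeasureTheory.measure_mono (μ := μ) hsub
  rw [MeasureTheory.measure_biUnion_finset hd fun c _ => measurableSet_ball] at hle
  simp only [μ.addHaar_ball_of_pos _ hδ, μ.addHaar_ball_of_pos _ hρ, Finset.sum_const,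
    nsmul_eq_mul, ← mul_assoc, finrank_euclideanSpace_fin] at hle
  rw [ENNReal.mul_le_mul_iff_left (Metric.measure_ball_pos _ _ zero_lt_one).ne'
    MeasureTheory.measure_ball_lt_top.ne] at hle
  have hreal := ENNReal.toReal_le_of_le_ofReal (pow_nonneg hρ.le _) hle
  rw [ENNReal.toReal_mul, ENNReal.toReal_natCast, ENNReal.toReal_ofReal (by positivity),
    ← le_div_iff₀ (by positivity), ← div_pow] at hreal
  refine hreal.trans_eq (congrArg (· ^ 3) ?_)
  field_simp

/-- Sixth inverse powers of radii with at most cubic growth of the counting function. -/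
lemma sum_inv_pow_six_le_sub {ι : Type*} [DecidableEq ι] (r : ι → ℝ) (m : ℕ) (hm : 27 ≤ m) :
    ∀ T : Finset ι, T.card = m → (∀ b ∈ T, 1 ≤ r b) →
      (∀ S ⊆ T, ∀ ρ, 1 ≤ ρ → (∀ b ∈ S, r b ≤ ρ) → (S.card : ℝ) ≤ 27 * ρ ^ 3) →
      ∑ b ∈ T, (1 : ℝ) / r b ^ 6 ≤ 54 - 729 / (m : ℝ) := by
  induction m, hm using Nat.le_induction with
  | base =>
    intro T hT hr _
    have h : ∑ b ∈ T, 1 / r b ^ 6 ≤ ∑ b ∈ T, (1 : ℝ) :=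
      Finset.sum_le_sum fun b hb => by
        rw [one_div]; exact inv_le_one_of_one_le₀ (one_le_pow₀ (hr b hb))
    rw [Finset.sum_const, hT] at h
    refine h.trans ?_
    norm_num
  | succ m hm ih =>
    intro T hT hr hcard
    obtain ⟨b, hb, hmax⟩ := T.exists_max_image r (Finset.card_pos.1 (by omega))
    have hr1 := hr b hb
    have hT' := hcard T (Finset.Subset.refl _) (r b) hr1 hmax
    have he := ih (T.erase b) (by rw [Finset.card_erase_of_mem hb]; omega)
      (fun c hc => hr c (Finset.mem_of_mem_erase hc))
      (fun S hS => hcard S (hS.trans (Finset.erase_subset _ _)))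
    rw [← Finset.add_sum_erase T _ hb]
    rw [hT] at hT'
    have hm0 : (0 : ℝ) < m := by exact_mod_cast (by omega : 0 < m)
    push_cast at hT' ⊢
    have h1 : 1 / r b ^ 6 ≤ 729 / ((m : ℝ) + 1) ^ 2 := by
      rw [div_le_div_iff₀ (by positivity) (by positivity)]
      nlinarith [pow_le_pow_left₀ (by positivity) hT' 2]
    have h2 : 729 / ((m : ℝ) + 1) ^ 2 ≤ 729 / m - 729 / (m + 1) := by
      rw [div_sub_div _ _ hm0.ne' (by positivity), div_le_div_iff₀ (by positivity) (by positivity)]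
      nlinarith
    linarith

lemma sum_inv_pow_six_le {ι : Type*} [DecidableEq ι] (r : ι → ℝ) (T : Finset ι)
    (hr : ∀ b ∈ T, 1 ≤ r b)
    (hcard : ∀ S ⊆ T, ∀ ρ, 1 ≤ ρ → (∀ b ∈ S, r b ≤ ρ) → (S.card : ℝ) ≤ 27 * ρ ^ 3) :
    ∑ b ∈ T, 1 / r b ^ 6 ≤ 54 := by
  rcases le_total 27 T.card with h | h
  · have h1 := sum_inv_pow_six_le_sub r T.card h T rfl hr hcard
    have h2 : (0 : ℝ) ≤ 729 / T.card := by positivity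
    linarith
  · have h1 : ∑ b ∈ T, 1 / r b ^ 6 ≤ ∑ b ∈ T, (1 : ℝ) :=
      Finset.sum_le_sum fun b hb => by
        rw [one_div]; exact inv_le_one_of_one_le₀ (one_le_pow₀ (hr b hb))
    have h2 : (T.card : ℝ) ≤ 27 := by exact_mod_cast h
    rw [Finset.sum_const, nsmul_eq_mul, mul_one] at h1
    linarith

/-- Decay sum over a separated set of rotations. -/
lemma sum_inv_rotAngle_pow_le {M : ℕ} {x : Fin M → Mat3} (hx : ∀ a, IsSO3 (x a)) {θ : ℝ}
    (hθ : 0 < θ) (hsep : ∀ a b, a ≠ b → θ ≤ rotAngle ((x b)⁻¹ * x a)) {s : ℕ} (hs : 6 ≤ s)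
    (a : Fin M) :
    ∑ b ∈ Finset.univ.erase a, 1 / rotAngle ((x b)⁻¹ * x a) ^ s ≤ 54 / θ ^ s := by
  have hz : ∀ b, IsSO3 ((x b)⁻¹ * x a) := fun b => (hx b).inv.mul (hx a)
  choose w hw hzw using fun b => (hz b).exists_expQuat
  have hwπ : ∀ b, ‖w b‖ ≤ π / 2 := fun b => by
    rw [hw]; linarith [rotAngle_le_pi ((x b)⁻¹ * x a)]
  have hdist : ∀ b c, b ≠ c → θ / 2 ≤ ‖w b - w c‖ := by
    intro b c hbc
    refine le_trans ?_ (rotAngle_div_two_le_norm_sub (hwπ b) (hwπ c)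
      ((hx b).inv.mul (hx c)) ?_)
    · linarith [hsep c b hbc.symm]
    · rw [← hzw b, ← hzw c, ← (hz c).inv_eq, Matrix.mul_inv_rev, (hx a).inv_eq,
        Matrix.nonsing_inv_nonsing_inv _ (by rw [(hx c).2]; exact isUnit_one), mul_assoc,
        ← mul_assoc (x a), mul_eq_one_comm.1 (hx a).1, one_mul]
  have h54 := sum_inv_pow_six_le (fun b => rotAngle ((x b)⁻¹ * x a) / θ) (Finset.univ.erase a)
    (fun b hb => (one_le_div hθ).2 (hsep a b (Finset.ne_of_mem_erase hb).symm)) (by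
      intro S hS ρ hρ hle
      have h := card_le_of_separated_ball S w (ε := θ / 2) (R := ρ * θ / 2) (by positivity)
        (by positivity) (fun b hb => by
          have := (div_le_iff₀ hθ).1 (hle b hb)
          rw [hw]; linarith) (fun b _ c _ => hdist b c)
      rw [show 2 * (ρ * θ / 2) / (θ / 2) + 1 = 2 * ρ + 1 by field_simp] at h
      calc (S.card : ℝ) ≤ (2 * ρ + 1) ^ 3 := h
        _ ≤ (3 * ρ) ^ 3 := by gcongr; linarith
        _ = 27 * ρ ^ 3 := by ring)
  calc ∑ b ∈ Finset.univ.erase a, 1 / rotAngle ((x b)⁻¹ * x a) ^ s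
      ≤ ∑ b ∈ Finset.univ.erase a, 1 / (rotAngle ((x b)⁻¹ * x a) / θ) ^ 6 * (1 / θ ^ s) := by
        refine Finset.sum_le_sum fun b hb => ?_
        have h1 := (one_le_div hθ).2 (hsep a b (Finset.ne_of_mem_erase hb).symm)
        set ω := rotAngle ((x b)⁻¹ * x a)
        have e : ω ^ s = (ω / θ) ^ s * θ ^ s := by rw [← mul_pow, div_mul_cancel₀ _ hθ.ne']
        rw [e, ← one_div_mul_one_div]
        gcongr
    _ ≤ 54 * (1 / θ ^ s) := by rw [← Finset.sum_mul]; gcongr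
    _ = 54 / θ ^ s := mul_one_div _ _

lemma rowSumNorm_le {M : ℕ} {A : Matrix (Fin M) (Fin M) ℝ} {B : ℝ} (hB : 0 ≤ B)
    (h : ∀ a, ∑ b, |A a b| ≤ B) : rowSumNorm A ≤ B :=
  Real.iSup_le h hB

/-- Neumann series bound for a perturbed multiple of the identity. -/
lemma isUnit_and_rowSumNorm_inv_le {M : ℕ} {A : Matrix (Fin M) (Fin M) ℝ} {D E : ℝ} (hE : 0 ≤ E)
    (hED : E < D) (h : ∀ a, ∑ b, |(D • (1 : Matrix (Fin M) (Fin M) ℝ) - A) a b| ≤ E) :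
    IsUnit A ∧ rowSumNorm A⁻¹ ≤ 1 / (D - E) := by
  let : NormedRing (Matrix (Fin M) (Fin M) ℝ) := Matrix.linftyOpNormedRing
  let : NormedAlgebra ℝ (Matrix (Fin M) (Fin M) ℝ) := Matrix.linftyOpNormedAlgebra
  have hle : ∀ (B : Matrix (Fin M) (Fin M) ℝ) (β : ℝ), 0 ≤ β → (∀ a, ∑ b, |B a b| ≤ β) →
      ‖B‖ ≤ β := by
    intro B β hβ hB
    rw [Matrix.linfty_opNorm_def, ← Real.coe_toNNReal β hβ, NNReal.coe_le_coe, Finset.sup_le_iff]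
    intro a _
    rw [← NNReal.coe_le_coe, Real.coe_toNNReal β hβ, NNReal.coe_sum]
    exact hB a
  have hge : ∀ (B : Matrix (Fin M) (Fin M) ℝ) a, ∑ b, |B a b| ≤ ‖B‖ := by
    intro B a
    rw [Matrix.linfty_opNorm_def]
    have := Finset.le_sup (f := fun i => ∑ j, ‖B i j‖₊) (Finset.mem_univ a)
    rw [← NNReal.coe_le_coe, NNReal.coe_sum] at this
    exact this
  have hD : 0 < D := hE.trans_lt hED
  have hnorm := hle _ E hE h
  have hone : ‖(1 : Matrix (Fin M) (Fin M) ℝ)‖ ≤ 1 :=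
    hle _ 1 zero_le_one fun a => by simp [Matrix.one_apply, apply_ite]
  have hunit : IsUnit A := by
    have h1 : IsUnit (1 - D⁻¹ • (D • (1 : Matrix (Fin M) (Fin M) ℝ) - A)) := by
      apply isUnit_one_sub_of_norm_lt_one
      rw [norm_smul, Real.norm_of_nonneg (by positivity), inv_mul_lt_iff₀ hD]
      linarith
    rw [smul_sub, smul_smul, inv_mul_cancel₀ hD.ne', one_smul, sub_sub_cancel] at h1
    have h2 := h1.smul (Units.mk0 D hD.ne')
    rwa [Units.smul_def, Units.val_mk0, smul_smul, mul_inv_cancel₀ hD.ne', one_smul] at h2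
  have hpos : 0 < D - E := sub_pos.2 hED
  refine ⟨hunit, rowSumNorm_le (by positivity) fun a => (hge _ a).trans ?_⟩
  have hinv : A * A⁻¹ = 1 :=
    Matrix.mul_nonsing_inv _ ((Matrix.isUnit_iff_isUnit_det _).1 hunit)
  have e : D • A⁻¹ = 1 + (D • (1 : Matrix (Fin M) (Fin M) ℝ) - A) * A⁻¹ := by
    rw [sub_mul, hinv, smul_mul_assoc, one_mul, add_sub_cancel]
  have h3 : D * ‖A⁻¹‖ ≤ 1 + E * ‖A⁻¹‖ := by
    calc D * ‖A⁻¹‖ = ‖D • A⁻¹‖ := by rw [norm_smul, Real.norm_of_nonneg hD.le]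
      _ ≤ _ := by
        rw [e]
        refine (norm_add_le _ _).trans (add_le_add hone ((norm_mul_le _ _).trans ?_))
        gcongr
  rw [le_div_iff₀ hpos]
  linarith

lemma one_le_zetaNat {m : ℕ} (hm : 2 ≤ m) : 1 ≤ zetaNat m := by
  have hsum : Summable fun n : ℕ => (1 : ℝ) / ((n : ℝ) + 1) ^ m := by
    have := (summable_nat_add_iff 1).2 (Real.summable_one_div_nat_pow.2 (by omega : 1 < m))
    simpa using this
  have := hsum.le_tsum 0 fun n _ => by positivity
  simpa [zetaNat] using this

lemma cConst_le_CConst {l s : ℕ} (hs : 6 ≤ s) (hc : 0 ≤ cConst l s) :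
    124 * cConst l s ≤ CConst l s :=
  le_mul_of_one_le_right (by positivity) (one_le_zetaNat (by omega))

lemma factorial_eq_mul {s : ℕ} (hs : 6 ≤ s) :
    ((s.factorial : ℕ) : ℝ) = s * ((s - 1).factorial : ℕ) := by
  rw [← Nat.mul_factorial_pred (by omega : s ≠ 0)]
  push_cast
  rfl

lemma CConst_zero_ge {s : ℕ} (hs : 6 ≤ s) : 54 * (1.03 * (2 ^ s * s.factorial)) ≤ CConst 0 s := by
  have h : cConst 0 s = 1.02 * (2 ^ s * s.factorial) := by
    rw [cConst, factorial_eq_mul hs]; ring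
  have h0 : (0 : ℝ) < 2 ^ s * s.factorial := by positivity
  have := cConst_le_CConst (l := 0) hs (by rw [h]; positivity)
  rw [h] at this
  linarith

lemma CConst_one_ge {s : ℕ} (hs : 6 ≤ s) :
    54 * (1.03 * (2 ^ s * s.factorial) * 2) ≤ CConst 1 s := by
  have h : cConst 1 s = 2.04 * (2 ^ s * s.factorial) := by
    rw [cConst, factorial_eq_mul hs]; ring
  have h0 : (0 : ℝ) < 2 ^ s * s.factorial := by positivity
  have := cConst_le_CConst (l := 1) hs (by rw [h]; positivity)
  rw [h] at this
  linarith

lemma CConst_two_ge {s : ℕ} (hs : 6 ≤ s) :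
    54 * (1.03 * (2 ^ s * s.factorial) * (20 / 3)) ≤ CConst 2 s := by
  have h : 4.08 * (2 ^ s * s.factorial : ℝ) ≤ cConst 2 s := by
    have : (0 : ℝ) ≤ 1.02 * (s - 1).factorial * 2 ^ s := by positivity
    rw [cConst, factorial_eq_mul hs]
    linarith
  have h0 : (0 : ℝ) < 2 ^ s * s.factorial := by positivity
  have := cConst_le_CConst (l := 2) hs (by linarith)
  linarith

/-- Row sums of a matrix vanishing on the diagonal with polynomial decay off the diagonal. -/
lemma row_sum_le_of_decay {M : ℕ} {x : Fin M → Mat3} (hx : ∀ a, IsSO3 (x a)) {n ν : ℝ}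
    (hn : 0 < n) (hν : 0 < ν) (hsep : ∀ a b, a ≠ b → ν / n ≤ rotAngle ((x b)⁻¹ * x a))
    {s : ℕ} (hs : 6 ≤ s) {A : Matrix (Fin M) (Fin M) ℝ} {K C : ℝ} (hK : 0 ≤ K)
    (hKC : 54 * K ≤ C) (hdiag : ∀ a, A a a = 0)
    (hoff : ∀ a b, a ≠ b → |A a b| ≤ K / (n * rotAngle ((x b)⁻¹ * x a)) ^ s) (a : Fin M) :
    ∑ b, |A a b| ≤ C / ν ^ s := by
  rw [← Finset.add_sum_erase _ _ (Finset.mem_univ a), hdiag, abs_zero, zero_add]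
  calc ∑ b ∈ Finset.univ.erase a, |A a b|
      ≤ ∑ b ∈ Finset.univ.erase a, K / n ^ s * (1 / rotAngle ((x b)⁻¹ * x a) ^ s) := by
        refine Finset.sum_le_sum fun b hb => ?_
        refine (hoff a b (Finset.ne_of_mem_erase hb).symm).trans_eq ?_
        rw [mul_pow, div_mul_div_comm, mul_one]
    _ ≤ K / n ^ s * (54 / (ν / n) ^ s) := by
        rw [← Finset.mul_sum]
        gcongr
        exact sum_inv_rotAngle_pow_le hx (by positivity) hsep hs a
    _ = 54 * K / ν ^ s := by rw [div_pow]; field_simp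
    _ ≤ C / ν ^ s := by gcongr

lemma abs_Xx_Xy_sigmaK_le_decay {s N : ℕ} (hs_even : Even s) (hs : 6 ≤ s) (hN : 2 * s ≤ N)
    {ν : ℝ} (hν : π ≤ ν) {x y : Mat3} (hx : IsSO3 x) (hy : IsSO3 y)
    (hsep : ν / ((N : ℝ) + 1) ≤ rotAngle (y⁻¹ * x)) (i j : Fin 3) :
    |Xx i (Xy j (sigmaK s N)) x y| ≤
      1.03 * (2 ^ s * s.factorial) * (20 / 3) * ((N : ℝ) + 1) ^ 2 /
        (((N : ℝ) + 1) * rotAngle (y⁻¹ * x)) ^ s := by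
  have hn : (1 : ℝ) ≤ (N : ℝ) + 1 := by linarith [N.cast_nonneg (α := ℝ)]
  have hν3 : 3 < ν := Real.pi_gt_three.trans_le hν
  have hpos : 0 < rotAngle (y⁻¹ * x) := lt_of_lt_of_le (by positivity) hsep
  have hπ := rotAngle_le_pi (y⁻¹ * x)
  have h := abs_Xx_Xy_sigmaK_le hx hy s N i j hpos
  have h1 := abs_sigmaD_le hs_even hs hN (l := 1) (by norm_num) hpos hπ
  have h2 := abs_sigmaD_le hs_even hs hN (l := 2) (by norm_num) hpos hπ
  simp only [decayConst, pow_one] at h1 h2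
  set n := (N : ℝ) + 1
  set ω := rotAngle (y⁻¹ * x)
  have hω : 1 / ω + 1 / 2 ≤ 5 / 6 * n := by
    have : 1 / ω ≤ n / 3 := by
      rw [div_le_iff₀ (by positivity)] at hsep
      rw [div_le_div_iff₀ hpos (by norm_num)]
      linarith
    linarith
  set P := 1.03 * (2 ^ s * (s.factorial : ℝ)) with hP
  have hP0 : 0 < P := by positivity
  calc _ ≤ _ := h
    _ ≤ P * 5 * n ^ 2 / (n * ω) ^ s + P * 2 * n / (n * ω) ^ s * (5 / 6 * n) := by gcongr
    _ = _ := by ring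

theorem interpolation_matrix_block_bounds
    (s N : ℕ) (hs_even : Even s) (hs : 6 ≤ s) (hN : 2 * s ≤ N)
    (ν : ℝ) (hν : π ≤ ν)
    (M : ℕ) (x : Fin M → Mat3) (hx : ∀ a, IsSO3 (x a)) (hinj : Function.Injective x)
    (hsep : ∀ a b, a ≠ b → ν / ((N : ℝ) + 1) ≤ rotAngle ((x b)⁻¹ * (x a))) :
    (rowSumNorm (1 - Matrix.of fun a b => sigmaK s N (x a) (x b)) ≤ CConst 0 s / ν ^ s) ∧
    (CConst 0 s / ν ^ s < 1 →
      IsUnit (Matrix.of fun a b => sigmaK s N (x a) (x b)) ∧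
      rowSumNorm (Matrix.of fun a b => sigmaK s N (x a) (x b))⁻¹ ≤
        1 / (1 - CConst 0 s / ν ^ s)) ∧
    (∀ i : Fin 3,
      rowSumNorm (Matrix.of fun a b => Xx i (sigmaK s N) (x a) (x b)) ≤
        CConst 1 s * ((N : ℝ) + 1) / ν ^ s ∧
      rowSumNorm (Matrix.of fun a b => Xy i (sigmaK s N) (x a) (x b)) ≤
        CConst 1 s * ((N : ℝ) + 1) / ν ^ s) ∧
    (∀ i j : Fin 3, i ≠ j →
      rowSumNorm (Matrix.of fun a b => Xx i (Xy j (sigmaK s N)) (x a) (x b)) ≤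
        CConst 2 s * ((N : ℝ) + 1) ^ 2 / ν ^ s) ∧
    (∀ i : Fin 3,
      rowSumNorm ((-(iteratedDeriv 2 (sigmaT s N) 0)) • (1 : Matrix (Fin M) (Fin M) ℝ)
          - Matrix.of fun a b => Xx i (Xy i (sigmaK s N)) (x a) (x b)) ≤
        CConst 2 s * ((N : ℝ) + 1) ^ 2 / ν ^ s ∧
      (CConst 2 s / ((0.999 / (2 * ((s : ℝ) + 1))) * ν ^ s) < 1 →
        IsUnit (Matrix.of fun a b => Xx i (Xy i (sigmaK s N)) (x a) (x b)) ∧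
        rowSumNorm (Matrix.of fun a b => Xx i (Xy i (sigmaK s N)) (x a) (x b))⁻¹ ≤
          1 / ((0.999 / (2 * ((s : ℝ) + 1))) * ((N : ℝ) + 1) ^ 2 *
            (1 - CConst 2 s / ((0.999 / (2 * ((s : ℝ) + 1))) * ν ^ s))))) := by

  have hν0 : 0 < ν := Real.pi_pos.trans_le hν
  have hn : (0 : ℝ) < (N : ℝ) + 1 := by positivity
  have hpos : ∀ a b, a ≠ b → 0 < rotAngle ((x b)⁻¹ * x a) := fun a b hab =>
    lt_of_lt_of_le (by positivity) (hsep a b hab)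
  have hC0 := CConst_zero_ge hs
  have hC1 := CConst_one_ge hs
  have hC2 := CConst_two_ge hs
  have hP0 : (0 : ℝ) < 1.03 * (2 ^ s * s.factorial) := by positivity
  have hC0' : 0 ≤ CConst 0 s := by linarith
  have hC1' : 0 ≤ CConst 1 s := by linarith
  have hC2' : 0 ≤ CConst 2 s := by linarith
  have hg : gnorm s N ≠ 0 := (gnorm_pos hs_even hs hN).ne'
  have row0 : ∀ a, ∑ b, |((1 : Matrix (Fin M) (Fin M) ℝ) -
      Matrix.of fun a b => sigmaK s N (x a) (x b)) a b| ≤ CConst 0 s / ν ^ s := by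
    refine row_sum_le_of_decay hx hn hν0 hsep hs hP0.le hC0 (fun a => ?_) (fun a b hab => ?_)
    · simp [sigmaK_self (hx a) hg]
    · have h := abs_sigmaD_le hs_even hs hN (l := 0) (by norm_num) (hpos a b hab)
        (rotAngle_le_pi _)
      simpa [hab, decayConst, sigmaD_zero, sigmaK] using h
  have row1 : ∀ i a, ∑ b, |Xx i (sigmaK s N) (x a) (x b)| ≤
      CConst 1 s * ((N : ℝ) + 1) / ν ^ s := by
    intro i
    refine row_sum_le_of_decay (A := Matrix.of fun a b => Xx i (sigmaK s N) (x a) (x b))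
      hx hn hν0 hsep hs (K := 1.03 * (2 ^ s * s.factorial) * 2 * ((N : ℝ) + 1))
      (by positivity) ?_ (fun a => ?_) (fun a b hab => ?_)
    · rw [← mul_assoc]; gcongr
    · exact Xx_sigmaK_self (hx a) s N i
    · have h := abs_sigmaD_le hs_even hs hN (l := 1) (by norm_num) (hpos a b hab)
        (rotAngle_le_pi _)
      rw [pow_one] at h
      exact (abs_Xx_sigmaK_le (hx a) (hx b) s N i).trans h
  have hK2 : 54 * (1.03 * (2 ^ s * s.factorial) * (20 / 3) * ((N : ℝ) + 1) ^ 2) ≤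
      CConst 2 s * ((N : ℝ) + 1) ^ 2 := by
    rw [← mul_assoc]; gcongr
  have hoff2 : ∀ (i j : Fin 3) (a b : Fin M), a ≠ b → _ := fun i j a b hab =>
    abs_Xx_Xy_sigmaK_le_decay hs_even hs hN hν (hx a) (hx b) (hsep a b hab) i j
  have row2 : ∀ i j, i ≠ j → ∀ a, ∑ b, |Xx i (Xy j (sigmaK s N)) (x a) (x b)| ≤
      CConst 2 s * ((N : ℝ) + 1) ^ 2 / ν ^ s := by
    intro i j hij
    refine row_sum_le_of_decay (A := Matrix.of fun a b => Xx i (Xy j (sigmaK s N)) (x a) (x b))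
      hx hn hν0 hsep hs (by positivity) hK2 (fun a => ?_) (hoff2 i j)
    rw [Matrix.of_apply, Xx_Xy_sigmaK_self (hx a), if_neg hij]
  have row3 : ∀ i a, ∑ b, |((-(iteratedDeriv 2 (sigmaT s N) 0)) •
      (1 : Matrix (Fin M) (Fin M) ℝ) -
        Matrix.of fun a b => Xx i (Xy i (sigmaK s N)) (x a) (x b)) a b| ≤
      CConst 2 s * ((N : ℝ) + 1) ^ 2 / ν ^ s := by
    intro i
    refine row_sum_le_of_decay hx hn hν0 hsep hs (by positivity) hK2 (fun a => ?_)
      (fun a b hab => ?_)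
    · simp [Xx_Xy_sigmaK_self (hx a), iteratedDeriv_two_sigmaT]
    · simpa [hab] using hoff2 i i a b hab
  refine ⟨rowSumNorm_le (by positivity) row0, fun hlt => ?_, fun i => ⟨?_, ?_⟩,
    fun i j hij => rowSumNorm_le (by positivity) (row2 i j hij),
    fun i => ⟨rowSumNorm_le (by positivity) (row3 i), fun hlt => ?_⟩⟩
  · exact isUnit_and_rowSumNorm_inv_le (by positivity) hlt (by simpa only [one_smul] using row0)
  · exact rowSumNorm_le (by positivity) (row1 i)
  · refine rowSumNorm_le (by positivity) fun a => ?_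
    simp only [Matrix.of_apply, Xy_sigmaK_eq_neg_Xx (hx _) (hx _), abs_neg]
    exact row1 i a
  · have hD := neg_sigmaD_two_zero_ge hs_even hs hN
    rw [← iteratedDeriv_two_sigmaT] at hD
    set c : ℝ := 0.999 / (2 * ((s : ℝ) + 1))
    have hc : 0 < c := by positivity
    have e : c * ((N : ℝ) + 1) ^ 2 * (1 - CConst 2 s / (c * ν ^ s)) =
        c * ((N : ℝ) + 1) ^ 2 - CConst 2 s * ((N : ℝ) + 1) ^ 2 / ν ^ s := by
      field_simp
    have hgap : 0 < c * ((N : ℝ) + 1) ^ 2 * (1 - CConst 2 s / (c * ν ^ s)) :=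
      mul_pos (by positivity) (sub_pos.2 hlt)
    rw [e] at hgap ⊢
    obtain ⟨hu, hinv⟩ := isUnit_and_rowSumNorm_inv_le (by positivity) (by linarith) (row3 i)
    exact ⟨hu, hinv.trans (one_div_le_one_div_of_le hgap (by linarith))⟩
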